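/- arXiv:1611.07414 — 8 statements merged into one kernel-verified Lean document; each statement's English description precedes it below -/
import Mathlib

section
/- There is an absolute constant A > 0 with the following property. Let G be a bipartite graph with finite parts F and C, let capacity types p ∈ {1,…,P} have capacities 0 < c_1 ≤ c_2 ≤ ⋯ ≤ c_P and multiplicities k_p ∈ ℕ, let (x,y) be a fractional solution satisfying (L1)–(L5), and let δ ∈ (0,1). Set Δ := A·(1/δ)·ln(2 + 1/δ). Then there exist a family x̂ with 0 ≤ x̂_{ijp} ≤ x_{ijp} for all i,j,p, pairwise disjoint sets S_1,…,S_K, T_1,…,T_L partitioning F, a partition C = C_del ⊔ C_blue ⊔ C_red, and nonempty pairwise disjoint sets J_1,…,J_L ⊆ C with C_red = J_1 ⊔ ⋯ ⊔ J_L, such that: (1) C_del is (Δ, δ)-deletable with respect to graph distance in G; (2) for each ℓ, any two vertices of T_ℓ are at graph distance at most Δ and every G-neighbor of a vertex of J_ℓ lies in T_ℓ; (3) for each k, any two vertices of S_k are at graph distance at most Δ, and there exist ȳ_{ip} ∈ {0,1} (i ∈ S_k, p ∈ [P]) with Σ_{q ≥ p} Σ_{i∈S_k} ȳ_{iq} ≤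 ⌊Σ_{q ≥ p} Σ_{i∈S_k} y_{iq}⌋ for every p, and Σ_{j∈C} Σ_{i∈S_k} Σ_p x̂_{ijp} ≤ (1+δ)·Σ_{i∈S_k} Σ_p c_p·ȳ_{ip}; (4) every client j ∈ C_blue satisfies Σ_{i ∈ S_1∪⋯∪S_K} Σ_p x̂_{ijp} ≥ 1 − δ/100. -/
open Finset

/-!
Facilities are clustered one ball at a time. Start at the free facility `s` that has the most active
clients next to it, say `d` of them, and grow a ball of free facilities around `s`, layer by layer,
along the active clients, for `O(δ⁻¹ log (2 + δ⁻¹))` layers. If some layer multiplies the number of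
clients reached by at most `1 + δ`, then the clients of the last layer can be deleted onto the
inner ones. All facilities next to the inner clients now lie in the ball or in earlier clusters. If
none of them lies in an earlier one, the ball is a complete neighborhood; otherwise a roundable
cluster touches the ball and absorbs it, and the inner clients are fully served by roundable
clusters.

If every layer multiplies the number of clients by more than `1 + δ`, the ball reaches at least
`200 * d / δ ^ 2` inner clients, each of which still lacks `δ / 100` units of service, so the ball
becomes a roundable cluster with load at least `2 * d / δ`. By maximality of `d` no facility that
joins it, then or later, serves more than `d` clients, so its capacities may be truncated to
`min (c p) d`. Rounding down the tail sums of `y` costs one unit of the largest truncated capacity,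
which is at most `δ / 2` times the load.
-/

namespace StrongDecomposition

section Rounding

variable {α τ : Type*} [LinearOrder τ]

theorem sum_mul_le_of_tail_sum_le {s : Finset τ} {b g : τ → ℝ} {a M : ℝ} (ha : 0 ≤ a)
    (hM : 0 ≤ M) (hb : Monotone b) (hb_nonneg : ∀ p ∈ s, 0 ≤ b p) (hb_le : ∀ p ∈ s, b p ≤ M)
    (hg : ∀ p ∈ s, ∑ q ∈ s with p ≤ q, g q ≤ a) : ∑ p ∈ s, b p * g p ≤ M * a := by
  induction s using Finset.induction_on_min generalizing b M with
  | empty => simpa using mul_nonneg hM ha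
  | insert p₀ s hlt ih =>
    simp only [forall_mem_insert] at hb_nonneg hb_le hg
    have hp₀ : p₀ ∉ s := fun h => lt_irrefl _ (hlt _ h)
    have htotal : g p₀ + ∑ p ∈ s, g p ≤ a := by
      rw [← sum_insert hp₀]
      refine le_of_eq_of_le (sum_congr (filter_true_of_mem ?_).symm fun _ _ => rfl) hg.1
      exact forall_mem_insert _ _ _ |>.2 ⟨le_rfl, fun p hp => (hlt p hp).le⟩
    have htail : ∀ p ∈ s, ∑ q ∈ s with p ≤ q, g q ≤ a := fun p hp => by
      simpa [filter_insert, (hlt p hp).not_ge] using hg.2 p hp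
    have hrest : ∑ p ∈ s, (b p - b p₀) * g p ≤ (M - b p₀) * a :=
      ih (sub_nonneg.2 hb_le.1) (fun p q hpq => sub_le_sub_right (hb hpq) _)
        (fun p hp => sub_nonneg.2 (hb (hlt p hp).le))
        (fun p hp => sub_le_sub_right (hb_le.2 p hp) _) htail
    calc ∑ p ∈ insert p₀ s, b p * g p
        = b p₀ * (g p₀ + ∑ p ∈ s, g p) + ∑ p ∈ s, (b p - b p₀) * g p := by
          simp only [sum_insert hp₀, sub_mul, sum_sub_distrib, ← mul_sum]
          ring
      _ ≤ b p₀ * a + (M - b p₀) * a := by gcongr; exact hb_nonneg.1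
      _ = M * a := by ring

theorem sum_tail_isGreatest [Fintype τ] {U : Set τ} [DecidablePred (· ∈ U)]
    [DecidablePred (IsGreatest U)] (hU : IsLowerSet U) (p : τ) :
    ∑ q with p ≤ q, (if IsGreatest U q then 1 else 0 : ℝ) = if p ∈ U then 1 else 0 := by
  split_ifs with hp
  · obtain ⟨q₀, hq₀⟩ : ∃ q, IsGreatest U q := Set.exists_max_image U id (Set.toFinite U) ⟨p, hp⟩
    rw [sum_eq_single_of_mem q₀ (by simpa using hq₀.2 hp)]
    · exact if_pos hq₀
    · exact fun q _ hne => if_neg fun hq => hne (hq.unique hq₀)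
  · exact sum_eq_zero fun q hq => if_neg fun h => hp (hU (mem_filter.1 hq).2 h.1)

theorem exists_card_filter_lt_eq (S : Finset α) :
    ∃ rank : α → ℕ, ∀ n ≤ #S, #{i ∈ S | rank i < n} = n := by
  classical
  refine ⟨fun i => if h : i ∈ S then S.equivFin ⟨i, h⟩ else 0, fun n hn => ?_⟩
  conv_rhs => rw [← card_range n]
  refine card_bij (fun i _ => if h : i ∈ S then S.equivFin ⟨i, h⟩ else 0) ?_ ?_ ?_
  · simp
  · intro i hi j hj hij
    simpa [(mem_filter.1 hi).1, (mem_filter.1 hj).1, Fin.val_inj] using hij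
  · intro k hk
    rw [mem_range] at hk
    exact ⟨S.equivFin.symm ⟨k, hk.trans_le hn⟩, by simp [hk], by simp⟩

theorem exists_zero_one_tail_sum_eq [Fintype τ] (S : Finset α) {n : τ → ℕ} (hn : Antitone n)
    (hnS : ∀ p, n p ≤ #S) :
    ∃ z : α → τ → ℝ, (∀ i p, z i p = 0 ∨ z i p = 1) ∧
      ∀ p, ∑ q with p ≤ q, ∑ i ∈ S, z i q = n p := by
  classical
  obtain ⟨rank, hrank⟩ := exists_card_filter_lt_eq S
  -- The facility of rank `k` is given the largest type `q` with `k < n q`.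
  refine ⟨fun i q => if IsGreatest {q | rank i < n q} q then 1 else 0,
    fun i q => (ite_eq_or_eq _ _ _).symm, fun p => ?_⟩
  have hlower (i : α) : IsLowerSet {q | rank i < n q} := fun q q' hq h => h.trans_le (hn hq)
  rw [sum_comm]
  simp only [sum_tail_isGreatest (hlower _), Set.mem_ofPred_eq]
  rw [sum_boole, hrank _ (hnS p)]

theorem exists_rounding [Fintype τ] (S : Finset α) {y : α → τ → ℝ} {b : τ → ℝ} {M : ℝ}
    (hy : ∀ i p, 0 ≤ y i p) (hy_sum : ∀ i ∈ S, ∑ p, y i p ≤ 1) (hM : 0 ≤ M) (hb : Monotone b)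
    (hb_nonneg : ∀ p, 0 ≤ b p) (hb_le : ∀ p, b p ≤ M) :
    ∃ z : α → τ → ℝ, (∀ i p, z i p = 0 ∨ z i p = 1) ∧
      (∀ p, ∑ q with p ≤ q, ∑ i ∈ S, z i q ≤
        (⌊∑ q with p ≤ q, ∑ i ∈ S, y i q⌋₊ : ℝ)) ∧
      ∑ i ∈ S, ∑ p, b p * y i p ≤ ∑ i ∈ S, ∑ p, b p * z i p + M := by
  have hnonneg (q : τ) : 0 ≤ ∑ i ∈ S, y i q := sum_nonneg fun i _ => hy i q
  have hanti : Antitone fun p => ⌊∑ q with p ≤ q, ∑ i ∈ S, y i q⌋₊ := fun p p' hp =>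
    Nat.floor_le_floor <| sum_le_sum_of_subset_of_nonneg
      (fun q hq => by simp only [mem_filter_univ] at hq ⊢; exact hp.trans hq)
      fun q _ _ => hnonneg q
  have hcard (p : τ) : ⌊∑ q with p ≤ q, ∑ i ∈ S, y i q⌋₊ ≤ #S := by
    refine Nat.floor_le_of_le ?_
    calc ∑ q with p ≤ q, ∑ i ∈ S, y i q
        ≤ ∑ q, ∑ i ∈ S, y i q :=
          sum_le_sum_of_subset_of_nonneg (filter_subset _ _) fun q _ _ => hnonneg q
      _ = ∑ i ∈ S, ∑ q, y i q := sum_comm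
      _ ≤ #S := by simpa using sum_le_sum hy_sum
  obtain ⟨z, hz, htail⟩ := exists_zero_one_tail_sum_eq S hanti hcard
  refine ⟨z, hz, fun p => (htail p).le, ?_⟩
  have habel : ∑ p, b p * (∑ i ∈ S, y i p - ∑ i ∈ S, z i p) ≤ M * 1 :=
    sum_mul_le_of_tail_sum_le zero_le_one hM hb (fun p _ => hb_nonneg p) (fun p _ => hb_le p)
      fun p _ => by
        rw [sum_sub_distrib, htail, sub_le_iff_le_add']
        exact (Nat.lt_floor_add_one _).le
  simp only [mul_sub, mul_sum, sum_sub_distrib] at habel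
  rw [sum_comm, sum_comm (s := S) (f := fun i p => b p * z i p)]
  linarith

end Rounding

section Growth

theorem exists_le_mul_or_pow_mul_le {a : ℕ → ℝ} {t : ℝ} (ht : 0 ≤ t) (m : ℕ) :
    (∃ k < m, a (k + 1) ≤ t * a k) ∨ t ^ m * a 0 ≤ a m := by
  refine or_iff_not_imp_left.2 fun h => ?_
  push Not at h
  induction m with
  | zero => simp
  | succ m ih =>
    calc t ^ (m + 1) * a 0 = t * (t ^ m * a 0) := by ring
      _ ≤ t * a m := by gcongr; exact ih fun k hk => h k (hk.trans m.lt_succ_self)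
      _ ≤ a (m + 1) := (h m m.lt_succ_self).le

theorem exp_half_le_one_add {δ : ℝ} (h₀ : 0 ≤ δ) (h₁ : δ ≤ 1) : Real.exp (δ / 2) ≤ 1 + δ := by
  have hhalf : |δ / 2| = δ / 2 := abs_of_nonneg (by positivity)
  have h := (abs_le.1 (Real.abs_exp_sub_one_le (x := δ / 2) (by linarith))).2
  linarith

theorem exp_mul_le_one_add_pow_ceil {δ : ℝ} (h₀ : 0 < δ) (h₁ : δ ≤ 1) (t : ℝ) :
    Real.exp t ≤ (1 + δ) ^ ⌈2 / δ * t⌉₊ := by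
  calc Real.exp t = Real.exp (2 / δ * t * (δ / 2)) := by congr 1; field_simp
    _ ≤ Real.exp (⌈2 / δ * t⌉₊ * (δ / 2)) := by gcongr; exact Nat.le_ceil _
    _ = Real.exp (δ / 2) ^ ⌈2 / δ * t⌉₊ := Real.exp_nat_mul _ _
    _ ≤ (1 + δ) ^ ⌈2 / δ * t⌉₊ := by gcongr; exact exp_half_le_one_add h₀.le h₁

theorem two_hundred_mul_sq_le_exp {u : ℝ} (hu : 1 ≤ u) :
    200 * u ^ 2 ≤ Real.exp (8 * Real.log (2 + u)) := by
  have hexp : Real.exp (8 * Real.log (2 + u)) = (2 + u) ^ 8 := by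
    rw [mul_comm, ← Real.rpow_def_of_pos (by positivity)]
    norm_cast
  calc 200 * u ^ 2 ≤ 3 ^ 6 * (2 + u) ^ 2 := by gcongr <;> linarith
    _ ≤ (2 + u) ^ 6 * (2 + u) ^ 2 := by gcongr; linarith
    _ = Real.exp (8 * Real.log (2 + u)) := by rw [hexp]; ring

theorem exists_number_of_layers {δ : ℝ} (h₀ : 0 < δ) (h₁ : δ ≤ 1) :
    ∃ m : ℕ, 200 / δ ^ 2 ≤ (1 + δ) ^ m ∧
      12 * m + 16 ≤ ⌊1000 * (1 / δ) * Real.log (2 + 1 / δ)⌋₊ := by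
  have hinv : 1 ≤ 1 / δ := by rw [one_le_div h₀]; exact h₁
  have hlog : 1 ≤ Real.log (2 + 1 / δ) := by
    rw [Real.le_log_iff_exp_le (by positivity)]
    linarith [Real.exp_one_lt_three]
  refine ⟨⌈2 / δ * (8 * Real.log (2 + 1 / δ))⌉₊, ?_, Nat.le_floor ?_⟩
  · calc 200 / δ ^ 2 = 200 * (1 / δ) ^ 2 := by field_simp
      _ ≤ Real.exp (8 * Real.log (2 + 1 / δ)) := two_hundred_mul_sq_le_exp hinv
      _ ≤ _ := exp_mul_le_one_add_pow_ceil h₀ h₁ _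
  · have hceil := Nat.ceil_lt_add_one (show 0 ≤ 2 / δ * (8 * Real.log (2 + 1 / δ)) by positivity)
    have hone : 1 ≤ 1 / δ * Real.log (2 + 1 / δ) := one_le_mul_of_one_le_of_one_le hinv hlog
    push_cast
    calc (12 : ℝ) * ⌈2 / δ * (8 * Real.log (2 + 1 / δ))⌉₊ + 16
        ≤ 12 * (2 / δ * (8 * Real.log (2 + 1 / δ)) + 1) + 16 := by gcongr
      _ = 192 * (1 / δ * Real.log (2 + 1 / δ)) + 28 := by ring
      _ ≤ 1000 * (1 / δ) * Real.log (2 + 1 / δ) := by linarith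

end Growth

section Graph

variable {V : Type*} {G : SimpleGraph V}

theorem edist_le_of_le_of_le {u v w : V} {a b n : ℕ} (huv : G.edist u v ≤ a)
    (hvw : G.edist v w ≤ b) (hn : a + b ≤ n) : G.edist u w ≤ n :=
  calc G.edist u w ≤ G.edist u v + G.edist v w := G.edist_triangle
    _ ≤ a + b := add_le_add huv hvw
    _ ≤ n := mod_cast hn

theorem edist_le_of_le_of_adj {u v w : V} {a n : ℕ} (huv : G.edist u v ≤ a) (hvw : G.Adj v w)
    (hn : a + 1 ≤ n) : G.edist u w ≤ n :=
  edist_le_of_le_of_le huv (by simp [SimpleGraph.edist_eq_one_iff_adj.2 hvw]) hn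

variable (G) in
open scoped Classical in
/-- The vertices of `A` that have a neighbor in `X`. -/
noncomputable def nbrsIn (A X : Finset V) : Finset V := {j ∈ A | ∃ i ∈ X, G.Adj i j}

@[simp]
theorem mem_nbrsIn {A X : Finset V} {j : V} : j ∈ nbrsIn G A X ↔ j ∈ A ∧ ∃ i ∈ X, G.Adj i j := by
  simp [nbrsIn]

theorem nbrsIn_subset {A X : Finset V} : nbrsIn G A X ⊆ A := fun _ hj => (mem_nbrsIn.1 hj).1

@[gcongr]
theorem nbrsIn_mono {A A' X X' : Finset V} (hA : A ⊆ A') (hX : X ⊆ X') :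
    nbrsIn G A X ⊆ nbrsIn G A' X' := fun _ hj => by
  obtain ⟨hj, i, hi, hij⟩ := mem_nbrsIn.1 hj
  exact mem_nbrsIn.2 ⟨hA hj, i, hX hi, hij⟩

/-- `Q` is a set of free facilities within distance `r` of `s`, and `I` is an inner layer of its
active clients: every free neighbor of `I` belongs to `Q`. Here `R` is the set of free facilities
and `A` the set of active clients. -/
structure IsBall (G : SimpleGraph V) (R A : Finset V) (r : ℕ) (s : V) (Q I : Finset V) : Prop where
  center_mem : s ∈ Q
  subset : Q ⊆ R
  inner_subset : I ⊆ nbrsIn G A Q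
  nbrsIn_inner_subset : nbrsIn G R I ⊆ Q
  edist_le : ∀ i ∈ Q, G.edist s i ≤ r

theorem IsBall.edist_le_of_mem_nbrsIn {R A Q I : Finset V} {r n : ℕ} {s j : V}
    (hb : IsBall G R A r s Q I) (hj : j ∈ nbrsIn G A Q) (hn : r + 1 ≤ n) : G.edist s j ≤ n := by
  obtain ⟨-, i, hi, hij⟩ := mem_nbrsIn.1 hj
  exact edist_le_of_le_of_adj (hb.edist_le i hi) hij hn

variable (G) in
open scoped Classical in
/-- The facilities in `R` that belong to `X` or share a client in `A` with `X`. -/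
noncomputable def grow (R A X : Finset V) : Finset V :=
  {i ∈ R | i ∈ X ∨ ∃ j ∈ nbrsIn G A X, G.Adj j i}

@[simp]
theorem mem_grow {R A X : Finset V} {i : V} :
    i ∈ grow G R A X ↔ i ∈ R ∧ (i ∈ X ∨ ∃ j ∈ nbrsIn G A X, G.Adj j i) := by
  simp only [grow, mem_filter]

theorem isBall_iterate_grow {R A : Finset V} {s : V} (hs : s ∈ R) {k r : ℕ}
    (hr : 2 * (k + 1) ≤ r) :
    IsBall G R A r s ((grow G R A)^[k + 1] {s}) (nbrsIn G A ((grow G R A)^[k] {s})) := by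
  have hsucc (k : ℕ) : (grow G R A)^[k + 1] {s} = grow G R A ((grow G R A)^[k] {s}) :=
    Function.iterate_succ_apply' ..
  have hball (k : ℕ) : s ∈ (grow G R A)^[k] {s} ∧ (grow G R A)^[k] {s} ⊆ R ∧
      ∀ i ∈ (grow G R A)^[k] {s}, G.edist s i ≤ (2 * k : ℕ) := by
    induction k with
    | zero => simpa using hs
    | succ k ih =>
      obtain ⟨hcenter, -, hdist⟩ := ih
      rw [hsucc]
      refine ⟨mem_grow.2 ⟨hs, .inl hcenter⟩, fun i hi => (mem_grow.1 hi).1, fun i hi => ?_⟩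
      rcases (mem_grow.1 hi).2 with hi | ⟨j, hj, hji⟩
      · exact (hdist i hi).trans (mod_cast by lia)
      · obtain ⟨-, i', hi', hij⟩ := mem_nbrsIn.1 hj
        exact edist_le_of_le_of_adj (edist_le_of_le_of_adj (hdist i' hi') hij le_rfl) hji (by lia)
  obtain ⟨hcenter, hsubset, hdist⟩ := hball (k + 1)
  refine ⟨hcenter, hsubset, ?_, ?_, fun i hi => (hdist i hi).trans (mod_cast hr)⟩ <;> rw [hsucc]
  · exact nbrsIn_mono subset_rfl fun i hi => mem_grow.2 ⟨(hball k).2.1 hi, .inl hi⟩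
  · exact fun i hi => mem_grow.2 ⟨nbrsIn_subset hi, .inr (mem_nbrsIn.1 hi).2⟩

theorem exists_isBall {R : Finset V} (A : Finset V) {s : V} (hs : s ∈ R) {t : ℝ} (ht : 0 ≤ t)
    (m : ℕ) :
    ∃ Q I, IsBall G R A (2 * m + 2) s Q I ∧
      ((#(nbrsIn G A Q) : ℝ) ≤ t * #I ∨ t ^ m * #(nbrsIn G A {s}) ≤ #I) := by
  obtain ⟨k, hk, hthin⟩ | hgrowth :=
    exists_le_mul_or_pow_mul_le (a := fun k => #(nbrsIn G A ((grow G R A)^[k] {s}))) ht m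
  · exact ⟨_, _, isBall_iterate_grow hs (by lia), .inl hthin⟩
  · exact ⟨_, _, isBall_iterate_grow hs le_rfl, .inr hgrowth⟩

end Graph

section Deletable

variable {V : Type*} {G : SimpleGraph V} {N : ℕ} {ρ : ℝ} {D R D' R' : Finset V}

variable (G) in
/-- The clients in `D` are `(N, ρ)`-deletable onto those in `R`: each of them distributes one unit
of weight over `R` within distance `N`, so that no client in `R` receives more than `ρ`. -/
def Deletable (N : ℕ) (ρ : ℝ) (D R : Finset V) : Prop :=
  ∃ w : V → V → ℝ,
    (∀ j j', 0 ≤ w j j' ∧ w j j' ≤ 1) ∧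
    (∀ j ∈ D, ∑ j' ∈ R, w j j' = 1) ∧
    (∀ j' ∈ R, ∑ j ∈ D, w j j' ≤ ρ) ∧
    (∀ j ∈ D, ∀ j' ∈ R, 0 < w j j' → G.edist j j' ≤ N)

theorem Deletable.mono {N' : ℕ} (hN : N ≤ N') (h : Deletable G N ρ D R) :
    Deletable G N' ρ D R := by
  obtain ⟨w, hw, hw_out, hw_in, hw_dist⟩ := h
  exact ⟨w, hw, hw_out, hw_in, fun j hj j' hj' hpos =>
    (hw_dist j hj j' hj' hpos).trans (mod_cast hN)⟩

theorem deletable_empty (hρ : 0 ≤ ρ) : Deletable G N ρ ∅ R :=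
  ⟨fun _ _ => 0, by simp [hρ]⟩

theorem deletable_of_card_le (hR : R.Nonempty) (hcard : #D ≤ ρ * #R)
    (hdist : ∀ j ∈ D, ∀ j' ∈ R, G.edist j j' ≤ N) : Deletable G N ρ D R := by
  have hpos : (0 : ℝ) < #R := mod_cast hR.card_pos
  have hone : (1 : ℝ) ≤ #R := mod_cast hR.card_pos
  refine ⟨fun _ _ => (#R : ℝ)⁻¹, fun _ _ => ⟨by positivity, inv_le_one_of_one_le₀ hone⟩,
    fun _ _ => ?_, fun _ _ => ?_, fun j hj j' hj' _ => hdist j hj j' hj'⟩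
  · simp [hpos.ne']
  · simpa [← div_eq_mul_inv, div_le_iff₀ hpos] using hcard

theorem Deletable.union [DecidableEq V] (h : Deletable G N ρ D R) (h' : Deletable G N ρ D' R')
    (hD : Disjoint D D') (hR : Disjoint R R') : Deletable G N ρ (D ∪ D') (R ∪ R') := by
  obtain ⟨w, hw, hw_out, hw_in, hw_dist⟩ := h
  obtain ⟨w', hw', hw_out', hw_in', hw_dist'⟩ := h'
  have hR₁ {j : V} (hj : j ∈ R) : j ∉ R' := disjoint_left.1 hR hj
  have hD₂ {j : V} (hj : j ∈ D') : j ∉ D := disjoint_right.1 hD hj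
  have hR₂ {j : V} (hj : j ∈ R') : j ∉ R := disjoint_right.1 hR hj
  refine ⟨fun j j' => if j ∈ D then if j' ∈ R then w j j' else 0
    else if j' ∈ R' then w' j j' else 0, fun j j' => ?_, fun j hj => ?_, fun j' hj' => ?_,
    fun j hj j' hj' => ?_⟩
  · dsimp only
    split_ifs <;> simp [hw, hw']
  · rw [sum_union hR]
    rcases mem_union.1 hj with hj | hj
    · simp +contextual [hj, hR₂, hw_out]
    · simp +contextual [hD₂ hj, hR₁, hw_out' j hj]
  · rw [sum_union hD]
    rcases mem_union.1 hj' with hj' | hj'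
    · simp +contextual [hj', hR₁ hj', hD₂, hw_in]
    · simp +contextual [hj', hR₂ hj', hD₂, hw_in']
  · rcases mem_union.1 hj with hj | hj <;> rcases mem_union.1 hj' with hj' | hj'
    · simpa [hj, hj'] using hw_dist j hj j' hj'
    · simp [hj, hR₂ hj']
    · simp [hD₂ hj, hR₁ hj']
    · simpa [hD₂ hj, hj'] using hw_dist' j hj j' hj'

end Deletable

section Construction

variable {V τ : Type*}

/-- The two kinds of clusters of the decomposition, labelled by their centers: `core s` becomes a
roundable set and `full t` a complete neighborhood. -/
inductive Cluster (V : Type*)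
  | core (s : V)
  | full (t : V)

/-- The center of a cluster. -/
def Cluster.center : Cluster V → V
  | core s => s
  | full t => t

/-- The status of a client: still to be treated, deleted, or settled in a cluster. Clients settled
in a core are the blue ones, those settled in a complete neighborhood the red ones. -/
inductive ClientStatus (V : Type*)
  | active
  | deleted
  | settled (κ : Cluster V)

/-- A stage of the construction: the cluster of each facility (`none` as long as the facility is
free), the status of each client, and for each clustered facility the set `seen` of clients that
were active when its cluster was assigned. -/
structure State (V : Type*) where
  cluster : V → Option (Cluster V)
  status : V → ClientStatus V
  seen : V → Finset V

namespace State

variable (σ : State V) {F C Q I D : Finset V} {κ κ' : Cluster V} {i j : V}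

open scoped Classical in
/-- The facilities without a cluster. -/
noncomputable def free (F : Finset V) : Finset V := {i ∈ F | σ.cluster i = none}

open scoped Classical in
/-- The facilities of the cluster `κ`. -/
noncomputable def members (F : Finset V) (κ : Cluster V) : Finset V :=
  {i ∈ F | σ.cluster i = some κ}

open scoped Classical in
/-- The active clients. -/
noncomputable def active (C : Finset V) : Finset V := {j ∈ C | σ.status j = .active}

open scoped Classical in
/-- The deleted clients. -/
noncomputable def deleted (C : Finset V) : Finset V := {j ∈ C | σ.status j = .deleted}

open scoped Classical in
/-- The clients settled in some cluster. -/
noncomputable def settled (C : Finset V) : Finset V := {j ∈ C | ∃ κ, σ.status j = .settled κ}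

/-- The clients that the reduced solution `x̂` assigns to the facility `i`: those that it saw, if it
belongs to a core. -/
def servedBy (i : V) : Finset V :=
  match σ.cluster i with
  | some (.core _) => σ.seen i
  | _ => ∅

open scoped Classical in
/-- The reduced solution `x̂`. -/
noncomputable def xhat (x : V → V → τ → ℝ) (i j : V) (p : τ) : ℝ :=
  if j ∈ σ.servedBy i then x i j p else 0

/-- The total service of the client `j` in the reduced solution. -/
noncomputable def service [Fintype τ] (F : Finset V) (x : V → V → τ → ℝ) (j : V) : ℝ :=
  ∑ i ∈ F, ∑ p, σ.xhat x i j p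

open scoped Classical in
/-- Puts the facilities in `Q` into the cluster `κ`. -/
noncomputable def assign (C Q : Finset V) (κ : Cluster V) : State V where
  cluster i := if i ∈ Q then some κ else σ.cluster i
  status := σ.status
  seen i := if i ∈ Q then σ.active C else σ.seen i

open scoped Classical in
/-- Settles the clients in `I` in the cluster `κ` and deletes those in `D`. -/
noncomputable def settle (I D : Finset V) (κ : Cluster V) : State V where
  cluster := σ.cluster
  status j := if j ∈ I then .settled κ else if j ∈ D then .deleted else σ.status j
  seen := σ.seen

/-- The state before the first step. -/
def initial (V : Type*) : State V where
  cluster _ := none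
  status _ := .active
  seen _ := ∅

/-- One step of the construction: the facilities in `Q` join the cluster `κ`, the clients in `I` are
settled there, and those in `D` are deleted. -/
noncomputable def move (C Q I D : Finset V) (κ : Cluster V) : State V :=
  (σ.assign C Q κ).settle I D κ

variable {σ}

@[simp]
theorem mem_free : i ∈ σ.free F ↔ i ∈ F ∧ σ.cluster i = none := by simp [free]

@[simp]
theorem mem_members : i ∈ σ.members F κ ↔ i ∈ F ∧ σ.cluster i = some κ := by simp [members]

@[simp]
theorem mem_active : j ∈ σ.active C ↔ j ∈ C ∧ σ.status j = .active := by simp [active]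

@[simp]
theorem mem_deleted : j ∈ σ.deleted C ↔ j ∈ C ∧ σ.status j = .deleted := by simp [deleted]

@[simp]
theorem mem_settled : j ∈ σ.settled C ↔ j ∈ C ∧ ∃ κ, σ.status j = .settled κ := by simp [settled]

theorem mem_servedBy : j ∈ σ.servedBy i ↔ (∃ s, σ.cluster i = some (.core s)) ∧ j ∈ σ.seen i := by
  unfold servedBy
  split <;> simp_all

theorem cluster_assign_eq_none :
    (σ.assign C Q κ).cluster i = none ↔ i ∉ Q ∧ σ.cluster i = none := by
  by_cases hi : i ∈ Q <;> simp [assign, hi]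

theorem cluster_assign_eq_some (hQ : Q ⊆ σ.free F) :
    (σ.assign C Q κ).cluster i = some κ' ↔ (i ∈ Q ∧ κ = κ') ∨ σ.cluster i = some κ' := by
  by_cases hi : i ∈ Q
  · simp [assign, hi, (mem_free.1 (hQ hi)).2]
  · simp [assign, hi]

theorem cluster_assign_of_eq_some (hQ : Q ⊆ σ.free F) (h : σ.cluster i = some κ') :
    (σ.assign C Q κ).cluster i = some κ' := (cluster_assign_eq_some hQ).2 (.inr h)

theorem seen_assign_of_mem (hi : i ∈ Q) : (σ.assign C Q κ).seen i = σ.active C := if_pos hi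

theorem seen_assign_of_notMem (hi : i ∉ Q) : (σ.assign C Q κ).seen i = σ.seen i := if_neg hi

theorem notMem_of_cluster_eq_some (hQ : Q ⊆ σ.free F) (h : σ.cluster i = some κ) : i ∉ Q :=
  fun hi => by simp [(mem_free.1 (hQ hi)).2] at h

theorem free_assign_subset : (σ.assign C Q κ).free F ⊆ σ.free F := fun i hi => by
  simp only [mem_free, cluster_assign_eq_none] at hi ⊢
  exact ⟨hi.1, hi.2.2⟩

theorem free_assign_ssubset (hQ : Q ⊆ σ.free F) (hne : Q.Nonempty) :
    (σ.assign C Q κ).free F ⊂ σ.free F := by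
  obtain ⟨i, hi⟩ := hne
  exact (ssubset_iff_of_subset free_assign_subset).2
    ⟨i, hQ hi, fun h => (cluster_assign_eq_none.1 (mem_free.1 h).2).1 hi⟩

theorem servedBy_subset_servedBy_assign (hQ : Q ⊆ σ.free F) :
    σ.servedBy i ⊆ (σ.assign C Q κ).servedBy i := fun j hj => by
  obtain ⟨⟨s, hs⟩, hj⟩ := mem_servedBy.1 hj
  refine mem_servedBy.2 ⟨⟨s, cluster_assign_of_eq_some hQ hs⟩, ?_⟩
  rwa [seen_assign_of_notMem (notMem_of_cluster_eq_some hQ hs)]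

theorem servedBy_assign_of_notMem (hi : i ∉ Q) :
    (σ.assign C Q κ).servedBy i = σ.servedBy i := by
  simp [servedBy, assign, hi]

theorem servedBy_assign_core_of_mem (hi : i ∈ Q) (s : V) :
    (σ.assign C Q (.core s)).servedBy i = σ.active C := by
  simp [servedBy, assign, hi]

theorem members_subset_members_assign (hQ : Q ⊆ σ.free F) :
    σ.members F κ' ⊆ (σ.assign C Q κ).members F κ' := fun i hi => by
  rw [mem_members] at hi ⊢
  exact ⟨hi.1, cluster_assign_of_eq_some hQ hi.2⟩

theorem active_settle_subset : (σ.settle I D κ).active C ⊆ σ.active C := fun j hj => by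
  by_cases hi : j ∈ I <;> by_cases hd : j ∈ D <;> simp_all [settle]

theorem cluster_move : (σ.move C Q I D κ).cluster = (σ.assign C Q κ).cluster := rfl

theorem seen_move : (σ.move C Q I D κ).seen = (σ.assign C Q κ).seen := rfl

theorem cluster_move_eq_some (hQ : Q ⊆ σ.free F) :
    (σ.move C Q I D κ).cluster i = some κ' ↔ (i ∈ Q ∧ κ = κ') ∨ σ.cluster i = some κ' := by
  rw [cluster_move, cluster_assign_eq_some hQ]

theorem status_move_eq_settled (hI : I ⊆ σ.active C) (hD : D ⊆ σ.active C) :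
    (σ.move C Q I D κ).status j = .settled κ' ↔
      (j ∈ I ∧ κ = κ') ∨ σ.status j = .settled κ' := by
  by_cases hi : j ∈ I
  · simp [move, settle, hi, (mem_active.1 (hI hi)).2]
  · by_cases hd : j ∈ D
    · simp [move, settle, hi, hd, (mem_active.1 (hD hd)).2]
    · simp [move, settle, assign, hi, hd]

theorem mem_active_move :
    j ∈ (σ.move C Q I D κ).active C ↔ j ∈ σ.active C ∧ j ∉ I ∧ j ∉ D := by
  by_cases hi : j ∈ I <;> by_cases hd : j ∈ D <;> simp [move, settle, assign, hi, hd]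

theorem deleted_move [DecidableEq V] (hI : I ⊆ σ.active C) (hD : D ⊆ σ.active C)
    (hID : Disjoint I D) : (σ.move C Q I D κ).deleted C = σ.deleted C ∪ D := by
  ext j
  by_cases hi : j ∈ I
  · simp [move, settle, hi, disjoint_left.1 hID hi, (mem_active.1 (hI hi)).2]
  · by_cases hd : j ∈ D
    · simp [move, settle, hi, hd, (mem_active.1 (hD hd)).1]
    · simp [move, settle, assign, hi, hd]

theorem settled_move [DecidableEq V] (hI : I ⊆ σ.active C) (hD : D ⊆ σ.active C) :
    (σ.move C Q I D κ).settled C = σ.settled C ∪ I := by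
  ext j
  have hjC : j ∈ I → j ∈ C := fun hj => (mem_active.1 (hI hj)).1
  simp only [mem_settled, mem_union, status_move_eq_settled hI hD, exists_or,
    exists_and_left, exists_eq', and_true]
  tauto

theorem disjoint_deleted_active : Disjoint (σ.deleted C) (σ.active C) :=
  disjoint_left.2 fun j hj hj' => by simp_all

theorem disjoint_settled_active : Disjoint (σ.settled C) (σ.active C) :=
  disjoint_left.2 fun j hj hj' => by simp_all

end State

end Construction

section Invariants

variable {V τ : Type*} [Fintype τ]

/-- Only facilities are clustered, and each of them lies within distance `N` of the center of its
cluster, which belongs to the cluster itself. -/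
structure IsClustering (G : SimpleGraph V) (F : Finset V) (N : ℕ) (σ : State V) : Prop where
  mem_of_eq_some : ∀ i κ, σ.cluster i = some κ → i ∈ F
  cluster_center : ∀ i κ, σ.cluster i = some κ → σ.cluster κ.center = some κ
  edist_le : ∀ i κ, σ.cluster i = some κ → G.edist κ.center i ≤ N

/-- Every full cluster contains its center and all neighbors of the clients settled in it, and
there is at least one such client. -/
structure IsFullNeighborhood (G : SimpleGraph V) (C : Finset V) (σ : State V) : Prop where
  exists_settled : ∀ i t, σ.cluster i = some (.full t) → ∃ j ∈ C, σ.status j = .settled (.full t)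
  cluster_center : ∀ j t, σ.status j = .settled (.full t) → σ.cluster t = some (.full t)
  cluster_of_adj : ∀ j t, σ.status j = .settled (.full t) → ∀ i, G.Adj j i →
    σ.cluster i = some (.full t)

/-- An active client receives less than `1 - δ / 100`, although the clustered facilities next to it
belong to cores, near their centers, that saw it. A client settled in a core receives at least
`1 - δ / 100`. -/
structure IsServing (G : SimpleGraph V) (F C : Finset V) (x : V → V → τ → ℝ) (δ : ℝ) (r : ℕ)
    (σ : State V) : Prop where
  near : ∀ j ∈ σ.active C, ∀ i, G.Adj j i → σ.cluster i = none ∨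
    ∃ s, σ.cluster i = some (.core s) ∧ j ∈ σ.seen i ∧ G.edist s i ≤ r
  service_lt : ∀ j ∈ σ.active C, σ.service F x j < 1 - δ / 100
  le_service : ∀ j s, σ.status j = .settled (.core s) → 1 - δ / 100 ≤ σ.service F x j

/-- For some bound `d` on the number of clients that a free facility, or a facility of the core `s`,
can serve, the load of the core `s` is at least `2 * d / δ`. -/
def IsHeavy (G : SimpleGraph V) (F C : Finset V) (x : V → V → τ → ℝ) (δ : ℝ) (σ : State V) (s : V) :
    Prop :=
  ∃ d : ℕ, (∀ i ∈ σ.free F, #(nbrsIn G (σ.active C) {i}) ≤ d) ∧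
    (∀ i, σ.cluster i = some (.core s) → #(nbrsIn G (σ.seen i) {i}) ≤ d) ∧
    2 * d / δ ≤ ∑ j ∈ C, ∑ i ∈ σ.members F (.core s), ∑ p, σ.xhat x i j p

variable [LinearOrder τ]

/-- `(x, y)` is a fractional solution for the facilities `F` and the clients `C`, whose capacities
`c` are weakly increasing in the capacity type. -/
structure IsFractional (G : SimpleGraph V) (F C : Finset V) (c : τ → ℝ) (x : V → V → τ → ℝ)
    (y : V → τ → ℝ) : Prop where
  mem_of_adj : ∀ j ∈ C, ∀ i, G.Adj j i → i ∈ F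
  cap_nonneg : ∀ p, 0 ≤ c p
  cap_mono : Monotone c
  x_nonneg : ∀ i j p, 0 ≤ x i j p
  y_nonneg : ∀ i p, 0 ≤ y i p
  adj_of_pos : ∀ i j p, 0 < x i j p → G.Adj i j
  covered : ∀ j ∈ C, 1 ≤ ∑ i ∈ F, ∑ p, x i j p
  sum_x_le : ∀ i ∈ F, ∀ p, ∑ j ∈ C, x i j p ≤ c p * y i p
  x_le_y : ∀ i ∈ F, ∀ j ∈ C, ∀ p, x i j p ≤ y i p
  sum_y_le : ∀ i ∈ F, ∑ p, y i p ≤ 1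

variable {G : SimpleGraph V} {F C Q I D : Finset V} {c : τ → ℝ} {x : V → V → τ → ℝ}
  {y : V → τ → ℝ} {δ : ℝ} {r N : ℕ} {σ : State V} {κ : Cluster V} {i j s : V}

theorem IsFractional.x_eq_zero (hx : IsFractional G F C c x y) (hij : ¬ G.Adj i j) (p : τ) :
    x i j p = 0 :=
  (hx.x_nonneg i j p).eq_of_not_lt' fun h => hij (hx.adj_of_pos i j p h)

namespace State

theorem xhat_nonneg (hx : IsFractional G F C c x y) (i j : V) (p : τ) : 0 ≤ σ.xhat x i j p := by
  unfold xhat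
  split_ifs
  exacts [hx.x_nonneg i j p, le_rfl]

theorem xhat_le (hx : IsFractional G F C c x y) (i j : V) (p : τ) :
    σ.xhat x i j p ≤ x i j p := by
  unfold xhat
  split_ifs
  exacts [le_rfl, hx.x_nonneg i j p]

theorem xhat_le_xhat_assign (hx : IsFractional G F C c x y) (hQ : Q ⊆ σ.free F) (i j : V) (p : τ) :
    σ.xhat x i j p ≤ (σ.assign C Q κ).xhat x i j p := by
  by_cases h : j ∈ σ.servedBy i
  · simp [xhat, h, servedBy_subset_servedBy_assign hQ h]
  · simpa [xhat, h] using xhat_nonneg hx i j p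

theorem service_le_service_assign (hx : IsFractional G F C c x y) (hQ : Q ⊆ σ.free F) (j : V) :
    σ.service F x j ≤ (σ.assign C Q κ).service F x j :=
  sum_le_sum fun i _ => sum_le_sum fun p _ => xhat_le_xhat_assign hx hQ i j p

theorem service_assign_of_forall_not_adj (hx : IsFractional G F C c x y)
    (hQ : ∀ i ∈ Q, ¬ G.Adj i j) : (σ.assign C Q κ).service F x j = σ.service F x j := by
  refine sum_congr rfl fun i _ => sum_congr rfl fun p _ => ?_
  by_cases hi : i ∈ Q
  · simp [xhat, hx.x_eq_zero (hQ i hi)]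
  · unfold xhat
    rw [servedBy_assign_of_notMem hi]

theorem one_le_service_add_sum (hx : IsFractional G F C c x y) (hQ : Q ⊆ F) (hj : j ∈ C)
    (hserved : ∀ i, G.Adj j i → i ∉ Q → j ∈ σ.servedBy i) :
    1 ≤ σ.service F x j + ∑ i ∈ Q, ∑ p, x i j p := by
  classical
  have hle (i : V) : ∑ p, x i j p ≤ ∑ p, σ.xhat x i j p + if i ∈ Q then ∑ p, x i j p else 0 := by
    by_cases hi : i ∈ Q
    · simpa [hi] using sum_nonneg fun p _ => xhat_nonneg hx i j p
    · by_cases hij : G.Adj j i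
      · simp [hi, xhat, hserved i hij hi]
      · simp [hi, xhat, hx.x_eq_zero fun h => hij h.symm]
  calc 1 ≤ ∑ i ∈ F, ∑ p, x i j p := hx.covered j hj
    _ ≤ ∑ i ∈ F, (∑ p, σ.xhat x i j p + if i ∈ Q then ∑ p, x i j p else 0) :=
      sum_le_sum fun i _ => hle i
    _ = σ.service F x j + ∑ i ∈ Q, ∑ p, x i j p := by
      rw [sum_add_distrib, sum_ite_mem, inter_eq_right.2 hQ, service]

theorem one_le_service (hx : IsFractional G F C c x y) (hj : j ∈ C)
    (hserved : ∀ i, G.Adj j i → j ∈ σ.servedBy i) : 1 ≤ σ.service F x j := by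
  simpa using one_le_service_add_sum hx (empty_subset F) hj fun i hij _ => hserved i hij

theorem sum_xhat_le_min_mul (hx : IsFractional G F C c x y) {d : ℕ} (hi : i ∈ F)
    (hd : #(nbrsIn G (σ.seen i) {i}) ≤ d) (p : τ) :
    ∑ j ∈ C, σ.xhat x i j p ≤ min (c p) d * y i p := by
  classical
  rw [min_mul_of_nonneg _ _ (hx.y_nonneg i p)]
  refine le_min ((sum_le_sum fun j _ => xhat_le hx i j p).trans (hx.sum_x_le i hi p)) ?_
  have hle : ∀ j ∈ C, σ.xhat x i j p ≤ if j ∈ nbrsIn G (σ.seen i) {i} then y i p else 0 := by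
    intro j hj
    by_cases hserved : j ∈ σ.servedBy i ∧ G.Adj i j
    · simpa [hserved.2, (mem_servedBy.1 hserved.1).2] using
        (xhat_le hx i j p).trans (hx.x_le_y i hi j hj p)
    · have hzero : σ.xhat x i j p = 0 := by
        rcases not_and_or.1 hserved with h | h
        · simp [xhat, h]
        · simp [xhat, hx.x_eq_zero h]
      rw [hzero]
      split_ifs
      exacts [hx.y_nonneg i p, le_rfl]
  calc ∑ j ∈ C, σ.xhat x i j p
      ≤ ∑ j ∈ C, if j ∈ nbrsIn G (σ.seen i) {i} then y i p else 0 := sum_le_sum hle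
    _ = #(C ∩ nbrsIn G (σ.seen i) {i}) * y i p := by rw [sum_ite_mem, sum_const, nsmul_eq_mul]
    _ ≤ d * y i p := by
      gcongr
      exacts [hx.y_nonneg i p, (card_le_card inter_subset_right).trans hd]

end State

/-- The capacities `yb ∈ {0, 1}` can be opened on `S` so that every tail sum over the larger
capacity types is at most the rounded down fractional one, while the load of `x` on `S` exceeds the
opened capacity by a factor of at most `1 + δ`. -/
def IsRoundable (C : Finset V) (c : τ → ℝ) (x : V → V → τ → ℝ) (y : V → τ → ℝ) (δ : ℝ)
    (S : Finset V) : Prop :=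
  ∃ yb : V → τ → ℝ,
    (∀ i p, yb i p = 0 ∨ yb i p = 1) ∧
    (∀ p, ∑ q with p ≤ q, ∑ i ∈ S, yb i q ≤ (⌊∑ q with p ≤ q, ∑ i ∈ S, y i q⌋₊ : ℝ)) ∧
    ∑ j ∈ C, ∑ i ∈ S, ∑ p, x i j p ≤ (1 + δ) * ∑ i ∈ S, ∑ p, c p * yb i p

-- Rounding with the capacities `min (c p) d` loses at most `d`, half of `δ` times the load.
theorem IsHeavy.isRoundable (hx : IsFractional G F C c x y) (hδ : 0 < δ) (hδ₁ : δ ≤ 1)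
    (h : IsHeavy G F C x δ σ s) :
    IsRoundable C c (σ.xhat x) y δ (σ.members F (.core s)) := by
  obtain ⟨d, -, hseen, hload⟩ := h
  obtain ⟨yb, hyb, htail, hround⟩ := exists_rounding (σ.members F (.core s))
    (b := fun p => min (c p) d) (M := d) hx.y_nonneg
    (fun i hi => hx.sum_y_le i (State.mem_members.1 hi).1) d.cast_nonneg
    (fun p q hpq => min_le_min_right _ (hx.cap_mono hpq))
    (fun p => le_min (hx.cap_nonneg p) d.cast_nonneg) (fun p => min_le_right _ _)
  refine ⟨yb, hyb, htail, ?_⟩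
  have hload_le : ∑ j ∈ C, ∑ i ∈ σ.members F (.core s), ∑ p, σ.xhat x i j p ≤
      ∑ i ∈ σ.members F (.core s), ∑ p, min (c p) d * y i p := by
    rw [sum_comm]
    refine sum_le_sum fun i hi => ?_
    obtain ⟨hiF, hi⟩ := State.mem_members.1 hi
    rw [sum_comm]
    exact sum_le_sum fun p _ => State.sum_xhat_le_min_mul hx hiF (hseen i hi) p
  have hcap : ∑ i ∈ σ.members F (.core s), ∑ p, min (c p) d * yb i p ≤
      ∑ i ∈ σ.members F (.core s), ∑ p, c p * yb i p := by
    gcongr with i _ p _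
    · rcases hyb i p with h | h <;> simp [h]
    · exact min_le_left _ _
  rw [div_le_iff₀ hδ] at hload
  nlinarith [d.cast_nonneg (α := ℝ)]

end Invariants

section Moves

variable {V τ : Type*} [Fintype τ]

/-- The invariants of the construction. Cores grow from balls of radius `r` and later absorb further
balls, which triples the radius. -/
structure IsValid (G : SimpleGraph V) (F C : Finset V) (x : V → V → τ → ℝ) (δ : ℝ) (r : ℕ)
    (σ : State V) : Prop where
  clustering : IsClustering G F (3 * r + 2) σ
  full : IsFullNeighborhood G C σ
  serving : IsServing G F C x δ r σ
  heavy : ∀ s, σ.cluster s = some (.core s) → IsHeavy G F C x δ σ s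
  deletable : Deletable G (6 * r + 4) δ (σ.deleted C) (σ.settled C)

/-- The conditions under which the invariants survive putting the free facilities `Q` into the
cluster `κ`, settling the active clients `I` there and deleting the active clients `D`. -/
structure IsAdmissible (G : SimpleGraph V) (F C : Finset V) (x : V → V → τ → ℝ) (δ : ℝ) (r : ℕ)
    (σ : State V) (Q I D : Finset V) (κ : Cluster V) : Prop where
  subset_free : Q ⊆ σ.free F
  settled_subset : I ⊆ σ.active C
  deleted_subset : D ⊆ σ.active C
  disjoint : Disjoint I D
  center : κ.center ∈ Q ∨ σ.cluster κ.center = some κ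
  edist_le : ∀ i ∈ Q, G.edist κ.center i ≤ (3 * r + 2 : ℕ)
  near : ∀ j ∈ σ.active C, j ∉ I → j ∉ D → ∀ i ∈ Q, G.Adj j i → ∃ s, κ = .core s ∧ G.edist s i ≤ r
  service_lt : ∀ j ∈ σ.active C, j ∉ I → j ∉ D → (σ.assign C Q κ).service F x j < 1 - δ / 100
  le_service : ∀ s, κ = .core s → ∀ j ∈ I, 1 - δ / 100 ≤ (σ.assign C Q κ).service F x j
  full : ∀ t, κ = .full t → I.Nonempty ∧ ∀ j ∈ I, ∀ i, G.Adj j i → i ∈ Q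
  heavy : ∀ s, κ = .core s → IsHeavy G F C x δ (σ.assign C Q κ) s
  deletable : Deletable G (6 * r + 4) δ D I

variable {G : SimpleGraph V} {F C Q I D : Finset V} {x : V → V → τ → ℝ} {δ : ℝ} {r N : ℕ}
  {σ : State V} {κ : Cluster V} {s : V}

theorem IsClustering.move (h : IsClustering G F N σ) (hQ : Q ⊆ σ.free F)
    (hcenter : κ.center ∈ Q ∨ σ.cluster κ.center = some κ)
    (hdist : ∀ i ∈ Q, G.edist κ.center i ≤ N) :
    IsClustering G F N (σ.move C Q I D κ) where
  mem_of_eq_some i κ' hi := by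
    rcases (State.cluster_move_eq_some hQ).1 hi with ⟨hiQ, -⟩ | hi
    exacts [(State.mem_free.1 (hQ hiQ)).1, h.mem_of_eq_some i κ' hi]
  cluster_center i κ' hi := by
    rcases (State.cluster_move_eq_some hQ).1 hi with ⟨-, rfl⟩ | hi
    · exact (State.cluster_move_eq_some hQ).2 (hcenter.imp_left fun h => ⟨h, rfl⟩)
    · exact (State.cluster_move_eq_some hQ).2 (.inr (h.cluster_center i κ' hi))
  edist_le i κ' hi := by
    rcases (State.cluster_move_eq_some hQ).1 hi with ⟨hiQ, rfl⟩ | hi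
    · exact hdist i hiQ
    · exact h.edist_le i κ' hi

theorem IsFullNeighborhood.move (h : IsFullNeighborhood G C σ) (hQ : Q ⊆ σ.free F)
    (hI : I ⊆ σ.active C) (hD : D ⊆ σ.active C)
    (hcenter : κ.center ∈ Q ∨ σ.cluster κ.center = some κ)
    (hfull : ∀ t, κ = .full t → I.Nonempty ∧ ∀ j ∈ I, ∀ i, G.Adj j i → i ∈ Q) :
    IsFullNeighborhood G C (σ.move C Q I D κ) := by
  refine ⟨fun i t hi => ?_, fun j t hj => ?_, fun j t hj i hij => ?_⟩
  · rcases (State.cluster_move_eq_some hQ).1 hi with ⟨-, rfl⟩ | hi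
    · obtain ⟨j, hj⟩ := (hfull t rfl).1
      exact ⟨j, (State.mem_active.1 (hI hj)).1,
        (State.status_move_eq_settled hI hD).2 (.inl ⟨hj, rfl⟩)⟩
    · obtain ⟨j, hjC, hj⟩ := h.exists_settled i t hi
      exact ⟨j, hjC, (State.status_move_eq_settled hI hD).2 (.inr hj)⟩
  · refine (State.cluster_move_eq_some hQ).2 ?_
    rcases (State.status_move_eq_settled hI hD).1 hj with ⟨-, rfl⟩ | hj
    · exact hcenter.imp_left fun h => ⟨h, rfl⟩
    · exact .inr (h.cluster_center j t hj)
  · refine (State.cluster_move_eq_some hQ).2 ?_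
    rcases (State.status_move_eq_settled hI hD).1 hj with ⟨hjI, rfl⟩ | hj
    · exact .inl ⟨(hfull t rfl).2 j hjI i hij, rfl⟩
    · exact .inr (h.cluster_of_adj j t hj i hij)

theorem IsHeavy.settle (h : IsHeavy G F C x δ σ s) : IsHeavy G F C x δ (σ.settle I D κ) s := by
  obtain ⟨d, hfree, hseen, hload⟩ := h
  exact ⟨d, fun i hi => (card_le_card (nbrsIn_mono State.active_settle_subset subset_rfl)).trans
    (hfree i hi), hseen, hload⟩

theorem isValid_initial (hδ : 0 < δ) (hδ₁ : δ ≤ 1) : IsValid G F C x δ r (State.initial V) where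
  clustering := by constructor <;> simp [State.initial]
  full := by constructor <;> simp [State.initial]
  serving := by
    refine ⟨by simp [State.initial], fun j _ => ?_, by simp [State.initial]⟩
    simp only [State.service, State.xhat, State.servedBy, State.initial, notMem_empty, if_false,
      sum_const_zero]
    linarith
  heavy := by simp [State.initial]
  deletable := by
    have hdeleted : (State.initial V).deleted C = ∅ := by simp [State.deleted, State.initial]
    exact hdeleted ▸ deletable_empty hδ.le

variable [LinearOrder τ] {c : τ → ℝ} {y : V → τ → ℝ}

theorem IsServing.move (hx : IsFractional G F C c x y) (hσ : IsServing G F C x δ r σ)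
    (h : IsAdmissible G F C x δ r σ Q I D κ) :
    IsServing G F C x δ r (σ.move C Q I D κ) := by
  refine ⟨fun j hj i hij => ?_, fun j hj => ?_, fun j s hj => ?_⟩
  · obtain ⟨hjA, hjI, hjD⟩ := State.mem_active_move.1 hj
    rw [State.cluster_move, State.seen_move]
    by_cases hi : i ∈ Q
    · obtain ⟨s, rfl, hdist⟩ := h.near j hjA hjI hjD i hi hij
      refine .inr ⟨s, (State.cluster_assign_eq_some h.subset_free).2 (.inl ⟨hi, rfl⟩), ?_, hdist⟩
      rwa [State.seen_assign_of_mem hi]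
    · refine (hσ.near j hjA i hij).imp (fun hi' => State.cluster_assign_eq_none.2 ⟨hi, hi'⟩) ?_
      rintro ⟨s, hs, hseen, hdist⟩
      refine ⟨s, State.cluster_assign_of_eq_some h.subset_free hs, ?_, hdist⟩
      rwa [State.seen_assign_of_notMem hi]
  · obtain ⟨hjA, hjI, hjD⟩ := State.mem_active_move.1 hj
    exact h.service_lt j hjA hjI hjD
  · rcases (State.status_move_eq_settled h.settled_subset h.deleted_subset).1 hj
      with ⟨hj, hκ⟩ | hj
    · exact h.le_service s hκ j hj
    · exact (hσ.le_service j s hj).trans (State.service_le_service_assign hx h.subset_free j)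

theorem IsHeavy.assign (hx : IsFractional G F C c x y) (h : IsHeavy G F C x δ σ s)
    (hQ : Q ⊆ σ.free F) : IsHeavy G F C x δ (σ.assign C Q κ) s := by
  obtain ⟨d, hfree, hseen, hload⟩ := h
  refine ⟨d, fun i hi => hfree i (State.free_assign_subset hi), fun i hi => ?_, hload.trans ?_⟩
  · by_cases hiQ : i ∈ Q
    · exact State.seen_assign_of_mem (σ := σ) hiQ ▸ hfree i (hQ hiQ)
    · rw [State.seen_assign_of_notMem hiQ]
      rcases (State.cluster_assign_eq_some hQ).1 hi with ⟨hi, -⟩ | hi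
      exacts [absurd hi hiQ, hseen i hi]
  · refine sum_le_sum fun j _ => ?_
    calc ∑ i ∈ σ.members F (.core s), ∑ p, σ.xhat x i j p
        ≤ ∑ i ∈ σ.members F (.core s), ∑ p, (σ.assign C Q κ).xhat x i j p :=
          sum_le_sum fun i _ => sum_le_sum fun p _ => State.xhat_le_xhat_assign hx hQ i j p
      _ ≤ ∑ i ∈ (σ.assign C Q κ).members F (.core s), ∑ p, (σ.assign C Q κ).xhat x i j p :=
          sum_le_sum_of_subset_of_nonneg (State.members_subset_members_assign hQ)
            fun i _ _ => sum_nonneg fun p _ => State.xhat_nonneg hx i j p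

theorem IsValid.move (hx : IsFractional G F C c x y) (hσ : IsValid G F C x δ r σ)
    (h : IsAdmissible G F C x δ r σ Q I D κ) :
    IsValid G F C x δ r (σ.move C Q I D κ) where
  clustering := hσ.clustering.move h.subset_free h.center h.edist_le
  full := hσ.full.move h.subset_free h.settled_subset h.deleted_subset h.center h.full
  serving := hσ.serving.move hx h
  heavy s hs := by
    rcases (State.cluster_move_eq_some h.subset_free).1 hs with ⟨-, hκ⟩ | hs
    · exact (h.heavy s hκ).settle
    · exact ((hσ.heavy s hs).assign hx h.subset_free).settle
  deletable := by
    classical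
    rw [State.deleted_move h.settled_subset h.deleted_subset h.disjoint,
      State.settled_move h.settled_subset h.deleted_subset]
    exact hσ.deletable.union h.deletable
      (State.disjoint_deleted_active.mono_right h.deleted_subset)
      (State.disjoint_settled_active.mono_right h.settled_subset)

end Moves

section Choice

variable {V τ : Type*} [Fintype τ] {G : SimpleGraph V} {F C Q I : Finset V} {x : V → V → τ → ℝ}
  {δ : ℝ} {r N : ℕ} {σ : State V} {s i j : V}

theorem not_adj_of_notMem [DecidableEq V] {A : Finset V} (hj : j ∈ A) (hjI : j ∉ I)
    (hjD : j ∉ nbrsIn G A Q \ I) : ∀ i ∈ Q, ¬ G.Adj i j :=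
  fun i hi hij => hjD (mem_sdiff.2 ⟨mem_nbrsIn.2 ⟨hj, i, hi, hij⟩, hjI⟩)

theorem IsBall.deletable_sdiff [DecidableEq V] {R A : Finset V} (hb : IsBall G R A r s Q I)
    (hI : I.Nonempty) (hthin : (#(nbrsIn G A Q) : ℝ) ≤ (1 + δ) * #I) (hN : 2 * (r + 1) ≤ N) :
    Deletable G N δ (nbrsIn G A Q \ I) I := by
  refine deletable_of_card_le hI ?_ fun j hj j' hj' => ?_
  · rw [cast_card_sdiff hb.inner_subset]
    linarith
  · have hj := hb.edist_le_of_mem_nbrsIn (mem_sdiff.1 hj).1 le_rfl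
    rw [G.edist_comm] at hj
    exact edist_le_of_le_of_le hj (hb.edist_le_of_mem_nbrsIn (hb.inner_subset hj') le_rfl) (by lia)

variable [LinearOrder τ] {c : τ → ℝ} {y : V → τ → ℝ}

theorem IsServing.mem_servedBy (hx : IsFractional G F C c x y) (hσ : IsServing G F C x δ r σ)
    (hb : IsBall G (σ.free F) (σ.active C) r s Q I) (hj : j ∈ I) (hij : G.Adj j i) (hi : i ∉ Q) :
    j ∈ σ.servedBy i := by
  have hjA : j ∈ σ.active C := nbrsIn_subset (hb.inner_subset hj)
  have hiF : i ∈ F := hx.mem_of_adj j (State.mem_active.1 hjA).1 i hij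
  obtain hfree | ⟨t, ht, hseen, -⟩ := hσ.near j hjA i hij
  · exact absurd (hb.nbrsIn_inner_subset
      (mem_nbrsIn.2 ⟨State.mem_free.2 ⟨hiF, hfree⟩, j, hj, hij⟩)) hi
  · exact State.mem_servedBy.2 ⟨⟨t, ht⟩, hseen⟩

theorem IsServing.div_le_sum (hx : IsFractional G F C c x y) (hσ : IsServing G F C x δ r σ)
    (hb : IsBall G (σ.free F) (σ.active C) r s Q I) (hj : j ∈ I) :
    δ / 100 ≤ ∑ i ∈ Q, ∑ p, x i j p := by
  have hjA : j ∈ σ.active C := nbrsIn_subset (hb.inner_subset hj)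
  have hone := State.one_le_service_add_sum hx (fun i hi => (State.mem_free.1 (hb.subset hi)).1)
    (State.mem_active.1 hjA).1 fun i hij hi => hσ.mem_servedBy hx hb hj hij hi
  linarith [hσ.service_lt j hjA]

theorem IsServing.isAdmissible_full [DecidableEq V] (hx : IsFractional G F C c x y)
    (hσ : IsServing G F C x δ r σ) (hb : IsBall G (σ.free F) (σ.active C) r s Q I)
    (hI : I.Nonempty) (hthin : (#(nbrsIn G (σ.active C) Q) : ℝ) ≤ (1 + δ) * #I)
    (hfree : ∀ j ∈ I, ∀ i, G.Adj j i → σ.cluster i = none) :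
    IsAdmissible G F C x δ r σ Q I (nbrsIn G (σ.active C) Q \ I) (.full s) where
  subset_free := hb.subset
  settled_subset := hb.inner_subset.trans nbrsIn_subset
  deleted_subset := sdiff_subset.trans nbrsIn_subset
  disjoint := disjoint_sdiff
  center := .inl hb.center_mem
  edist_le i hi := (hb.edist_le i hi).trans (mod_cast by lia)
  near j hj hjI hjD i hi hij := absurd hij.symm (not_adj_of_notMem hj hjI hjD i hi)
  service_lt j hj hjI hjD := by
    rw [State.service_assign_of_forall_not_adj hx (not_adj_of_notMem hj hjI hjD)]
    exact hσ.service_lt j hj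
  le_service := by simp
  full := by
    rintro t -
    refine ⟨hI, fun j hj i hij => ?_⟩
    have hjC : j ∈ C := (State.mem_active.1 (nbrsIn_subset (hb.inner_subset hj))).1
    exact hb.nbrsIn_inner_subset (mem_nbrsIn.2
      ⟨State.mem_free.2 ⟨hx.mem_of_adj j hjC i hij, hfree j hj i hij⟩, j, hj, hij⟩)
  heavy := by simp
  deletable := hb.deletable_sdiff hI hthin (by lia)

theorem IsValid.isAdmissible_absorb [DecidableEq V] (hx : IsFractional G F C c x y) (hδ : 0 ≤ δ)
    (hσ : IsValid G F C x δ r σ) (hb : IsBall G (σ.free F) (σ.active C) r s Q I)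
    (hthin : (#(nbrsIn G (σ.active C) Q) : ℝ) ≤ (1 + δ) * #I) {t : V} (hj : j ∈ I)
    (hij : G.Adj j i) (hi : σ.cluster i = some (.core t)) (hdist : G.edist t i ≤ r) :
    IsAdmissible G F C x δ r σ Q I (nbrsIn G (σ.active C) Q \ I) (.core t) where
  subset_free := hb.subset
  settled_subset := hb.inner_subset.trans nbrsIn_subset
  deleted_subset := sdiff_subset.trans nbrsIn_subset
  disjoint := disjoint_sdiff
  center := .inr (hσ.clustering.cluster_center i _ hi)
  edist_le i' hi' := by
    have htj : G.edist t j ≤ (r + 1 : ℕ) := edist_le_of_le_of_adj hdist hij.symm le_rfl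
    have hsj := hb.edist_le_of_mem_nbrsIn (hb.inner_subset hj) le_rfl
    rw [G.edist_comm] at hsj
    exact edist_le_of_le_of_le (edist_le_of_le_of_le htj hsj le_rfl) (hb.edist_le i' hi') (by lia)
  near j hj hjI hjD i hi hij := absurd hij.symm (not_adj_of_notMem hj hjI hjD i hi)
  service_lt j hj hjI hjD := by
    rw [State.service_assign_of_forall_not_adj hx (not_adj_of_notMem hj hjI hjD)]
    exact hσ.serving.service_lt j hj
  le_service _ _ j hj := by
    have hjA : j ∈ σ.active C := nbrsIn_subset (hb.inner_subset hj)
    have hone := State.one_le_service (σ := σ.assign C Q (.core t)) hx (State.mem_active.1 hjA).1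
      fun i hij => by
        by_cases hi : i ∈ Q
        · rwa [State.servedBy_assign_core_of_mem hi]
        · exact State.servedBy_subset_servedBy_assign hb.subset
            (hσ.serving.mem_servedBy hx hb hj hij hi)
    linarith
  full := by simp
  heavy t' ht' := by
    obtain rfl : t = t' := by simpa using ht'
    exact (hσ.heavy t (hσ.clustering.cluster_center i _ hi)).assign hx hb.subset
  deletable := hb.deletable_sdiff ⟨j, hj⟩ hthin (by lia)

theorem IsValid.isHeavy_assign_core (hx : IsFractional G F C c x y) (hδ : 0 < δ)
    (hσ : IsValid G F C x δ r σ) (hb : IsBall G (σ.free F) (σ.active C) r s Q I) {d : ℕ}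
    (hd : ∀ i ∈ σ.free F, #(nbrsIn G (σ.active C) {i}) ≤ d) (hgrowth : 200 / δ ^ 2 * d ≤ #I) :
    IsHeavy G F C x δ (σ.assign C Q (.core s)) s := by
  have hactive : I ⊆ σ.active C := hb.inner_subset.trans nbrsIn_subset
  have hcore (i : V) : (σ.assign C Q (.core s)).cluster i = some (.core s) ↔ i ∈ Q := by
    have hs : σ.cluster s = none := (State.mem_free.1 (hb.subset hb.center_mem)).2
    have hi (hi : σ.cluster i = some (.core s)) : False := by
      simpa [Cluster.center, hs] using hσ.clustering.cluster_center i _ hi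
    simpa [State.cluster_assign_eq_some hb.subset] using fun h => (hi h).elim
  have hmembers : (σ.assign C Q (.core s)).members F (.core s) = Q := by
    ext i
    simpa [hcore] using fun hi => (State.mem_free.1 (hb.subset hi)).1
  refine ⟨d, fun i hi => hd i (State.free_assign_subset hi), fun i hi => ?_, ?_⟩
  · have hiQ : i ∈ Q := (hcore i).1 hi
    rw [State.seen_assign_of_mem hiQ]
    exact hd i (hb.subset hiQ)
  · rw [hmembers]
    calc 2 * d / δ = δ / 100 * (200 / δ ^ 2 * d) := by field_simp; ring
      _ ≤ δ / 100 * #I := by gcongr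
      _ = ∑ j ∈ I, δ / 100 := by rw [sum_const, nsmul_eq_mul, mul_comm]
      _ ≤ ∑ j ∈ I, ∑ i ∈ Q, ∑ p, x i j p :=
        sum_le_sum fun j hj => hσ.serving.div_le_sum hx hb hj
      _ = ∑ j ∈ I, ∑ i ∈ Q, ∑ p, (σ.assign C Q (.core s)).xhat x i j p :=
        sum_congr rfl fun j hj => sum_congr rfl fun i hi => sum_congr rfl fun p _ => by
          rw [State.xhat, State.servedBy_assign_core_of_mem hi, if_pos (hactive hj)]
      _ ≤ ∑ j ∈ C, ∑ i ∈ Q, ∑ p, (σ.assign C Q (.core s)).xhat x i j p :=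
        sum_le_sum_of_subset_of_nonneg (fun j hj => (State.mem_active.1 (hactive hj)).1)
          fun j _ _ => sum_nonneg fun i _ => sum_nonneg fun p _ => State.xhat_nonneg hx i j p

open scoped Classical in
theorem IsValid.isAdmissible_core (hx : IsFractional G F C c x y) (hδ : 0 < δ)
    (hσ : IsValid G F C x δ r σ) (hb : IsBall G (σ.free F) (σ.active C) r s Q I) {d : ℕ}
    (hd : ∀ i ∈ σ.free F, #(nbrsIn G (σ.active C) {i}) ≤ d) (hgrowth : 200 / δ ^ 2 * d ≤ #I) :
    IsAdmissible G F C x δ r σ Q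
      {j ∈ σ.active C | 1 - δ / 100 ≤ (σ.assign C Q (.core s)).service F x j} ∅ (.core s) where
  subset_free := hb.subset
  settled_subset := filter_subset ..
  deleted_subset := empty_subset _
  disjoint := disjoint_empty_right _
  center := .inl hb.center_mem
  edist_le i hi := (hb.edist_le i hi).trans (mod_cast by lia)
  near _ _ _ _ i hi _ := ⟨s, rfl, hb.edist_le i hi⟩
  service_lt j hj hjI _ := not_le.1 fun hle => hjI (mem_filter.2 ⟨hj, hle⟩)
  le_service t ht j hj := by
    obtain rfl : s = t := by simpa using ht
    exact (mem_filter.1 hj).2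
  full := by simp
  heavy t ht := by
    obtain rfl : s = t := by simpa using ht
    exact hσ.isHeavy_assign_core hx hδ hb hd hgrowth
  deletable := deletable_empty hδ.le

theorem IsValid.exists_isAdmissible {m : ℕ} (hx : IsFractional G F C c x y) (hδ : 0 < δ)
    (hm : 200 / δ ^ 2 ≤ (1 + δ) ^ m) (hσ : IsValid G F C x δ (2 * m + 2) σ)
    (hfree : (σ.free F).Nonempty) :
    ∃ Q I D κ, Q.Nonempty ∧ IsAdmissible G F C x δ (2 * m + 2) σ Q I D κ := by
  classical
  obtain ⟨s, hs, hd⟩ := exists_max_image _ (fun i => #(nbrsIn G (σ.active C) {i})) hfree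
  obtain ⟨Q, I, hb, hball⟩ := exists_isBall (G := G) (σ.active C) hs (by positivity : 0 ≤ 1 + δ) m
  have hcore (hgrowth : 200 / δ ^ 2 * #(nbrsIn G (σ.active C) {s}) ≤ (#I : ℝ)) :=
    hσ.isAdmissible_core hx hδ hb hd hgrowth
  rcases hball with hthin | hgrowth
  · rcases I.eq_empty_or_nonempty with rfl | hI
    · have hempty : nbrsIn G (σ.active C) Q = ∅ := by simpa using hthin
      have hsQ : nbrsIn G (σ.active C) {s} ⊆ nbrsIn G (σ.active C) Q :=
        nbrsIn_mono subset_rfl (by simpa using hb.center_mem)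
      refine ⟨Q, _, _, _, ⟨s, hb.center_mem⟩, hcore ?_⟩
      simp [subset_empty.1 (hsQ.trans hempty.subset)]
    · by_cases htouch : ∃ j ∈ I, ∃ i t, G.Adj j i ∧ σ.cluster i = some (.core t) ∧
        G.edist t i ≤ (2 * m + 2 : ℕ)
      · obtain ⟨j, hj, i, t, hij, hi, hdist⟩ := htouch
        exact ⟨Q, _, _, _, ⟨s, hb.center_mem⟩,
          hσ.isAdmissible_absorb hx hδ.le hb hthin hj hij hi hdist⟩
      · refine ⟨Q, _, _, _, ⟨s, hb.center_mem⟩,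
          hσ.serving.isAdmissible_full hx hb hI hthin fun j hj i hij => ?_⟩
        refine (hσ.serving.near j (nbrsIn_subset (hb.inner_subset hj)) i hij).resolve_right ?_
        rintro ⟨t, hi, -, hdist⟩
        exact htouch ⟨j, hj, i, t, hij, hi, hdist⟩
  · exact ⟨Q, _, _, _, ⟨s, hb.center_mem⟩, hcore (le_trans (by gcongr) hgrowth)⟩

theorem IsValid.exists_free_eq_empty {m : ℕ} (hx : IsFractional G F C c x y) (hδ : 0 < δ)
    (hm : 200 / δ ^ 2 ≤ (1 + δ) ^ m) (hσ : IsValid G F C x δ (2 * m + 2) σ) :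
    ∃ σ' : State V, IsValid G F C x δ (2 * m + 2) σ' ∧ σ'.free F = ∅ := by
  induction hn : σ.free F using Finset.strongInduction generalizing σ with
  | H R ih =>
    subst hn
    rcases (σ.free F).eq_empty_or_nonempty with hempty | hfree
    · exact ⟨σ, hσ, hempty⟩
    · obtain ⟨Q, I, D, κ, hQ, h⟩ := hσ.exists_isAdmissible hx hδ hm hfree
      exact ih _ (State.free_assign_ssubset (C := C) (κ := κ) h.subset_free hQ) (hσ.move hx h) rfl

end Choice

section Decomposition

variable {V τ : Type*} [Fintype τ] {G : SimpleGraph V} {F C : Finset V} {x : V → V → τ → ℝ}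
  {δ : ℝ} {r N : ℕ} {σ : State V} {κ : V → Cluster V} {i j : V}

namespace State

open scoped Classical in
/-- The centers of the clusters of the kind `κ`, which is `Cluster.core` or `Cluster.full`. -/
noncomputable def centers (σ : State V) (F : Finset V) (κ : V → Cluster V) : Finset V :=
  {s ∈ F | σ.cluster s = some (κ s)}

/-- An enumeration of the clusters of the kind `κ`. -/
noncomputable def nthCluster (σ : State V) (F : Finset V) (κ : V → Cluster V)
    (k : Fin #(σ.centers F κ)) : Cluster V :=
  κ ((σ.centers F κ).equivFin.symm k)

open scoped Classical in
/-- The clients settled in the cluster `κ`. -/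
noncomputable def settledIn (σ : State V) (C : Finset V) (κ : Cluster V) : Finset V :=
  {j ∈ C | σ.status j = .settled κ}

open scoped Classical in
/-- The clients settled in some cluster of the kind `κ`. -/
noncomputable def settledInKind (σ : State V) (C : Finset V) (κ : V → Cluster V) : Finset V :=
  {j ∈ C | ∃ s, σ.status j = .settled (κ s)}

@[simp]
theorem mem_centers {s : V} : s ∈ σ.centers F κ ↔ s ∈ F ∧ σ.cluster s = some (κ s) := by
  simp [centers]

@[simp]
theorem mem_settledIn {κ : Cluster V} : j ∈ σ.settledIn C κ ↔ j ∈ C ∧ σ.status j = .settled κ := by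
  simp [settledIn]

@[simp]
theorem mem_settledInKind :
    j ∈ σ.settledInKind C κ ↔ j ∈ C ∧ ∃ s, σ.status j = .settled (κ s) := by
  simp [settledInKind]

theorem cluster_center_nthCluster (hκ : ∀ s, (κ s).center = s) (k : Fin #(σ.centers F κ)) :
    σ.cluster (σ.nthCluster F κ k).center = some (σ.nthCluster F κ k) := by
  rw [nthCluster, hκ]
  exact (mem_centers.1 ((σ.centers F κ).equivFin.symm k).2).2

theorem exists_nthCluster_eq {s : V} (hs : s ∈ F)
    (h : σ.cluster s = some (κ s)) : ∃ k, σ.nthCluster F κ k = κ s :=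
  ⟨(σ.centers F κ).equivFin ⟨s, mem_centers.2 ⟨hs, h⟩⟩, by simp [nthCluster]⟩

theorem nthCluster_injective (hκ : ∀ s, (κ s).center = s) :
    Function.Injective (σ.nthCluster F κ) :=
  (Function.LeftInverse.injective (g := Cluster.center) hκ).comp
    (Subtype.val_injective.comp (Equiv.injective _))

theorem disjoint_members {κ κ' : Cluster V} (h : κ ≠ κ') :
    Disjoint (σ.members F κ) (σ.members F κ') :=
  disjoint_left.2 fun i hi hi' => h (by simp_all)

theorem disjoint_settledIn {κ κ' : Cluster V} (h : κ ≠ κ') :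
    Disjoint (σ.settledIn C κ) (σ.settledIn C κ') :=
  disjoint_left.2 fun j hj hj' => h (by simp_all)

theorem disjoint_deleted_settledInKind : Disjoint (σ.deleted C) (σ.settledInKind C κ) :=
  disjoint_left.2 fun j hj hj' => by simp_all

theorem disjoint_settledInKind_core_full :
    Disjoint (σ.settledInKind C .core) (σ.settledInKind C .full) := by
  refine disjoint_left.2 fun j hj hj' => ?_
  obtain ⟨-, s, hs⟩ := mem_settledInKind.1 hj
  obtain ⟨-, t, ht⟩ := mem_settledInKind.1 hj'
  simp [hs] at ht

theorem deleted_union_settledInKind [DecidableEq V] (h : σ.active C = ∅) :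
    σ.deleted C ∪ σ.settledInKind C .core ∪ σ.settledInKind C .full = C := by
  ext j
  have hj : j ∈ C → σ.status j ≠ .active := fun hjC hj => by simpa [h] using mem_active.2 ⟨hjC, hj⟩
  rcases hstatus : σ.status j with _ | _ | _ | _ <;> simp_all

theorem sdiff_deleted [DecidableEq V] (h : σ.active C = ∅) :
    C \ σ.deleted C = σ.settled C := by
  ext j
  have hj : j ∈ C → σ.status j ≠ .active := fun hjC hj => by simpa [h] using mem_active.2 ⟨hjC, hj⟩
  rcases hstatus : σ.status j with _ | _ | _ <;> simp_all

end State

theorem IsClustering.mem_biUnion_members [DecidableEq V] (h : IsClustering G F N σ)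
    (hκ : ∀ s, (κ s).center = s) :
    i ∈ univ.biUnion (fun k => σ.members F (σ.nthCluster F κ k)) ↔
      ∃ s, σ.cluster i = some (κ s) := by
  simp only [mem_biUnion, mem_univ, true_and, State.mem_members]
  refine ⟨fun ⟨k, _, hi⟩ => ⟨_, hi⟩, fun ⟨s, hi⟩ => ?_⟩
  have hs : σ.cluster s = some (κ s) := by simpa [hκ] using h.cluster_center i _ hi
  obtain ⟨k, hk⟩ := State.exists_nthCluster_eq (h.mem_of_eq_some _ _ hs) hs
  exact ⟨k, h.mem_of_eq_some _ _ hi, hk ▸ hi⟩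

theorem IsClustering.biUnion_union_biUnion [DecidableEq V] (h : IsClustering G F N σ)
    (hfree : σ.free F = ∅) :
    univ.biUnion (fun k => σ.members F (σ.nthCluster F .core k)) ∪
      univ.biUnion (fun l => σ.members F (σ.nthCluster F .full l)) = F := by
  ext i
  rw [mem_union, h.mem_biUnion_members fun _ => rfl, h.mem_biUnion_members fun _ => rfl]
  refine ⟨fun hi => ?_, fun hi => ?_⟩
  · rcases hi with ⟨s, hs⟩ | ⟨t, ht⟩
    exacts [h.mem_of_eq_some i _ hs, h.mem_of_eq_some i _ ht]
  · rcases hcluster : σ.cluster i with _ | s | t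
    · simpa [hfree] using State.mem_free.2 ⟨hi, hcluster⟩
    · exact .inl ⟨s, rfl⟩
    · exact .inr ⟨t, rfl⟩

theorem IsFullNeighborhood.biUnion_settledIn [DecidableEq V] (h : IsFullNeighborhood G C σ)
    (hσ : IsClustering G F N σ) :
    univ.biUnion (fun l => σ.settledIn C (σ.nthCluster F .full l)) =
      σ.settledInKind C .full := by
  ext j
  simp only [mem_biUnion, mem_univ, true_and, State.mem_settledIn, State.mem_settledInKind]
  refine ⟨fun ⟨l, hjC, hj⟩ => ⟨hjC, _, hj⟩, fun ⟨hjC, t, hj⟩ => ?_⟩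
  have ht : σ.cluster t = some (.full t) := h.cluster_center j t hj
  obtain ⟨l, hl⟩ := State.exists_nthCluster_eq (hσ.mem_of_eq_some t _ ht) ht
  exact ⟨l, hjC, hl ▸ hj⟩

theorem IsClustering.edist_le_of_mem_members (h : IsClustering G F N σ) {κ : Cluster V} {u v : V}
    (hu : u ∈ σ.members F κ) (hv : v ∈ σ.members F κ) {n : ℕ} (hn : 2 * N ≤ n) :
    G.edist u v ≤ n := by
  have hu := h.edist_le u κ (State.mem_members.1 hu).2
  rw [G.edist_comm] at hu
  exact edist_le_of_le_of_le hu (h.edist_le v κ (State.mem_members.1 hv).2) (by lia)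

theorem IsClustering.service_eq [DecidableEq V] (h : IsClustering G F N σ) (j : V) :
    σ.service F x j =
      ∑ i ∈ univ.biUnion (fun k => σ.members F (σ.nthCluster F .core k)), ∑ p, σ.xhat x i j p := by
  refine (sum_subset (fun i hi => ?_) fun i _ hi => ?_).symm
  · obtain ⟨s, hs⟩ := (h.mem_biUnion_members fun _ => rfl).1 hi
    exact h.mem_of_eq_some i _ hs
  · have hserved : j ∉ σ.servedBy i := fun hj =>
      hi ((h.mem_biUnion_members fun _ => rfl).2 (State.mem_servedBy.1 hj).1)
    simp [State.xhat, hserved]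

variable [LinearOrder τ] {c : τ → ℝ} {y : V → τ → ℝ}

theorem IsServing.active_eq_empty (hx : IsFractional G F C c x y) (hδ : 0 ≤ δ)
    (hσ : IsServing G F C x δ r σ) (hfree : σ.free F = ∅) : σ.active C = ∅ := by
  refine eq_empty_of_forall_notMem fun j hj => ?_
  have hjC : j ∈ C := (State.mem_active.1 hj).1
  have hone : 1 ≤ σ.service F x j := State.one_le_service hx hjC fun i hij => by
    rcases hσ.near j hj i hij with hi | ⟨s, hs, hseen, -⟩
    · exact absurd (State.mem_free.2 ⟨hx.mem_of_adj j hjC i hij, hi⟩) (hfree ▸ notMem_empty i)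
    · exact State.mem_servedBy.2 ⟨⟨s, hs⟩, hseen⟩
  linarith [hσ.service_lt j hj]

/-- The conclusion of the decomposition theorem, with the graph distances bounded by `N`: the
roundable sets `S` and the complete neighborhoods `T` with their responsible clients `J` partition
the facilities, and every client is deleted, blue or red. -/
structure IsStrongDecomposition [DecidableEq V] (G : SimpleGraph V) (F C : Finset V) (c : τ → ℝ)
    (x : V → V → τ → ℝ) (y : V → τ → ℝ) (δ : ℝ) (N : ℕ) (xh : V → V → τ → ℝ) {K L : ℕ}
    (S : Fin K → Finset V) (T : Fin L → Finset V) (Cdel Cblue Cred : Finset V)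
    (J : Fin L → Finset V) : Prop where
  xhat_bounds : ∀ i j p, 0 ≤ xh i j p ∧ xh i j p ≤ x i j p
  disjoint_core : ∀ k₁ k₂, k₁ ≠ k₂ → Disjoint (S k₁) (S k₂)
  disjoint_full : ∀ l₁ l₂, l₁ ≠ l₂ → Disjoint (T l₁) (T l₂)
  disjoint_core_full : ∀ k l, Disjoint (S k) (T l)
  biUnion_eq : univ.biUnion S ∪ univ.biUnion T = F
  disjoint_del_blue : Disjoint Cdel Cblue
  disjoint_del_red : Disjoint Cdel Cred
  disjoint_blue_red : Disjoint Cblue Cred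
  union_eq : Cdel ∪ Cblue ∪ Cred = C
  red_nonempty : ∀ l, (J l).Nonempty
  disjoint_red : ∀ l₁ l₂, l₁ ≠ l₂ → Disjoint (J l₁) (J l₂)
  biUnion_red_eq : univ.biUnion J = Cred
  deletable : Deletable G N δ Cdel (C \ Cdel)
  edist_full_le : ∀ l, ∀ u ∈ T l, ∀ v ∈ T l, G.edist u v ≤ N
  mem_full_of_adj : ∀ l, ∀ j ∈ J l, ∀ v, G.Adj j v → v ∈ T l
  edist_core_le : ∀ k, ∀ u ∈ S k, ∀ v ∈ S k, G.edist u v ≤ N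
  isRoundable : ∀ k, IsRoundable C c xh y δ (S k)
  le_sum : ∀ j ∈ Cblue, 1 - δ / 100 ≤ ∑ i ∈ univ.biUnion S, ∑ p, xh i j p

theorem IsValid.isStrongDecomposition [DecidableEq V] (hx : IsFractional G F C c x y) (hδ : 0 < δ)
    (hδ₁ : δ ≤ 1) (hN : 6 * r + 4 ≤ N) (hσ : IsValid G F C x δ r σ) (hfree : σ.free F = ∅) :
    IsStrongDecomposition G F C c x y δ N (σ.xhat x)
      (fun k => σ.members F (σ.nthCluster F .core k))
      (fun l => σ.members F (σ.nthCluster F .full l))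
      (σ.deleted C) (σ.settledInKind C .core) (σ.settledInKind C .full)
      (fun l => σ.settledIn C (σ.nthCluster F .full l)) where
  xhat_bounds i j p := ⟨State.xhat_nonneg hx i j p, State.xhat_le hx i j p⟩
  disjoint_core k₁ k₂ h := State.disjoint_members ((State.nthCluster_injective fun _ => rfl).ne h)
  disjoint_full l₁ l₂ h := State.disjoint_members ((State.nthCluster_injective fun _ => rfl).ne h)
  disjoint_core_full k l := State.disjoint_members nofun
  biUnion_eq := hσ.clustering.biUnion_union_biUnion hfree
  disjoint_del_blue := State.disjoint_deleted_settledInKind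
  disjoint_del_red := State.disjoint_deleted_settledInKind
  disjoint_blue_red := State.disjoint_settledInKind_core_full
  union_eq := State.deleted_union_settledInKind (hσ.serving.active_eq_empty hx hδ.le hfree)
  red_nonempty l := by
    obtain ⟨j, hjC, hj⟩ := hσ.full.exists_settled _ _
      (State.cluster_center_nthCluster (fun _ => rfl) l)
    exact ⟨j, State.mem_settledIn.2 ⟨hjC, hj⟩⟩
  disjoint_red l₁ l₂ h := State.disjoint_settledIn ((State.nthCluster_injective fun _ => rfl).ne h)
  biUnion_red_eq := hσ.full.biUnion_settledIn hσ.clustering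
  deletable := by
    rw [State.sdiff_deleted (hσ.serving.active_eq_empty hx hδ.le hfree)]
    exact hσ.deletable.mono hN
  edist_full_le l u hu v hv := hσ.clustering.edist_le_of_mem_members hu hv (by lia)
  mem_full_of_adj l j hj v hjv := by
    obtain ⟨hjC, hj⟩ := State.mem_settledIn.1 hj
    exact State.mem_members.2 ⟨hx.mem_of_adj j hjC v hjv, hσ.full.cluster_of_adj j _ hj v hjv⟩
  edist_core_le k u hu v hv := hσ.clustering.edist_le_of_mem_members hu hv (by lia)
  isRoundable k :=
    (hσ.heavy _ (State.cluster_center_nthCluster (fun _ => rfl) k)).isRoundable hx hδ hδ₁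
  le_sum j hj := by
    obtain ⟨-, s, hs⟩ := State.mem_settledInKind.1 hj
    exact (hσ.serving.le_service j s hs).trans_eq (hσ.clustering.service_eq j)

theorem strong_decomposition_general [DecidableEq V] (hx : IsFractional G F C c x y) (hδ : 0 < δ)
    (hδ₁ : δ ≤ 1) :
    ∃ (xh : V → V → τ → ℝ) (K L : ℕ) (S : Fin K → Finset V) (T : Fin L → Finset V)
      (Cdel Cblue Cred : Finset V) (J : Fin L → Finset V),
      IsStrongDecomposition G F C c x y δ ⌊1000 * (1 / δ) * Real.log (2 + 1 / δ)⌋₊ xh S T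
        Cdel Cblue Cred J := by
  obtain ⟨m, hm, hN⟩ := exists_number_of_layers hδ hδ₁
  obtain ⟨σ, hσ, hfree⟩ := (isValid_initial hδ hδ₁).exists_free_eq_empty hx hδ hm
  exact ⟨_, _, _, _, _, _, _, _, _, hσ.isStrongDecomposition hx hδ hδ₁ (by lia) hfree⟩

end Decomposition

end StrongDecomposition

open StrongDecomposition in
/-- Strong LP-based decomposition theorem: there is an absolute constant `A > 0` such that,
given a bipartite graph with facility part `F` and client part `C`, capacities
`0 < c 1 ≤ … ≤ c P` with multiplicities `k p`, a fractional solution `(x, y)` satisfying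
(L1)–(L5), and `δ ∈ (0,1)`, setting `Δ := A * (1/δ) * ln(2 + 1/δ)` there is a family `x̂ ≤ x`,
a partition of `F` into roundable sets `S_1, …, S_K` and complete neighborhoods
`T_1, …, T_L` (with responsible client sets `J_1, …, J_L`), and a partition
`C = C_del ⊔ C_blue ⊔ C_red` with `C_red = J_1 ⊔ … ⊔ J_L`, satisfying properties (1)–(4). -/
theorem strong_decomposition :
    ∃ A : ℝ, 0 < A ∧
      ∀ (V : Type) [DecidableEq V] (G : SimpleGraph V) (F C : Finset V),
        Disjoint F C →
        (∀ a b : V, G.Adj a b → (a ∈ F ∧ b ∈ C) ∨ (a ∈ C ∧ b ∈ F)) →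
        ∀ (P : ℕ) (c : Fin P → ℝ) (k : Fin P → ℕ)
          (x : V → V → Fin P → ℝ) (y : V → Fin P → ℝ) (δ : ℝ),
        (∀ p, 0 < c p) → Monotone c →
        (∀ i j p, 0 ≤ x i j p ∧ x i j p ≤ 1) →
        (∀ i p, 0 ≤ y i p ∧ y i p ≤ 1) →
        (∀ i j p, 0 < x i j p → G.Adj i j) →
        (∀ j ∈ C, 1 ≤ ∑ i ∈ F, ∑ p, x i j p) →                       -- (L1)
        (∀ i ∈ F, ∀ p, ∑ j ∈ C, x i j p ≤ c p * y i p) →             -- (L2)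
        (∀ p, ∑ i ∈ F, y i p ≤ (k p : ℝ)) →                          -- (L3)
        (∀ i ∈ F, ∀ j ∈ C, ∀ p, x i j p ≤ y i p) →                   -- (L4)
        (∀ i ∈ F, ∑ p, y i p ≤ 1) →                                  -- (L5)
        0 < δ → δ < 1 →
        ∃ (xh : V → V → Fin P → ℝ) (K L : ℕ)
          (S : Fin K → Finset V) (T : Fin L → Finset V)
          (Cdel Cblue Cred : Finset V) (J : Fin L → Finset V),
          -- `x̂` is dominated by `x`
          (∀ i j p, 0 ≤ xh i j p ∧ xh i j p ≤ x i j p) ∧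
          -- the `S_k` and `T_ℓ` are pairwise disjoint and partition `F`
          (∀ k₁ k₂, k₁ ≠ k₂ → Disjoint (S k₁) (S k₂)) ∧
          (∀ ℓ₁ ℓ₂, ℓ₁ ≠ ℓ₂ → Disjoint (T ℓ₁) (T ℓ₂)) ∧
          (∀ k' ℓ, Disjoint (S k') (T ℓ)) ∧
          (Finset.univ.biUnion S ∪ Finset.univ.biUnion T = F) ∧
          -- `C_del ⊔ C_blue ⊔ C_red` partitions `C`
          Disjoint Cdel Cblue ∧ Disjoint Cdel Cred ∧ Disjoint Cblue Cred ∧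
          (Cdel ∪ Cblue ∪ Cred = C) ∧
          -- the `J_ℓ` are nonempty, pairwise disjoint, and partition `C_red`
          (∀ ℓ, (J ℓ).Nonempty) ∧
          (∀ ℓ₁ ℓ₂, ℓ₁ ≠ ℓ₂ → Disjoint (J ℓ₁) (J ℓ₂)) ∧
          (Finset.univ.biUnion J = Cred) ∧
          -- (1) `C_del` is `(Δ, δ)`-deletable w.r.t. graph distance in `G`
          (∃ w : V → V → ℝ,
            (∀ j j', 0 ≤ w j j' ∧ w j j' ≤ 1) ∧
            (∀ j ∈ Cdel, ∑ j' ∈ C \ Cdel, w j j' = 1) ∧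
            (∀ j' ∈ C \ Cdel, ∑ j ∈ Cdel, w j j' ≤ δ) ∧
            (∀ j ∈ Cdel, ∀ j' ∈ C \ Cdel, 0 < w j j' →
              G.edist j j' ≤ (⌊A * (1 / δ) * Real.log (2 + 1 / δ)⌋₊ : ℕ∞))) ∧
          -- (2) each `T_ℓ` has diameter at most `Δ` and is a complete neighborhood of `J_ℓ`
          (∀ ℓ, ∀ u ∈ T ℓ, ∀ v ∈ T ℓ,
            G.edist u v ≤ (⌊A * (1 / δ) * Real.log (2 + 1 / δ)⌋₊ : ℕ∞)) ∧
          (∀ ℓ, ∀ j ∈ J ℓ, ∀ v : V, G.Adj j v → v ∈ T ℓ) ∧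
          -- (3) each `S_k` has diameter at most `Δ` and is `(Δ, 1+δ)`-roundable w.r.t. `(x̂, y)`
          (∀ k', ∀ u ∈ S k', ∀ v ∈ S k',
            G.edist u v ≤ (⌊A * (1 / δ) * Real.log (2 + 1 / δ)⌋₊ : ℕ∞)) ∧
          (∀ k', ∃ yb : V → Fin P → ℝ,
            (∀ i p, yb i p = 0 ∨ yb i p = 1) ∧
            (∀ p : Fin P,
              ∑ q ∈ Finset.univ.filter (fun q => p ≤ q), ∑ i ∈ S k', yb i q ≤
                (⌊∑ q ∈ Finset.univ.filter (fun q => p ≤ q), ∑ i ∈ S k', y i q⌋₊ : ℝ)) ∧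
            (∑ j ∈ C, ∑ i ∈ S k', ∑ p, xh i j p ≤
              (1 + δ) * ∑ i ∈ S k', ∑ p, c p * yb i p)) ∧
          -- (4) blue clients are almost fully served by the `S_k`
          (∀ j ∈ Cblue, 1 - δ / 100 ≤ ∑ i ∈ Finset.univ.biUnion S, ∑ p, xh i j p) := by
  refine ⟨1000, by norm_num, fun V _ G F C hFC hG P c _ x y δ hc hmono hx hy hadj hcovered hcap _
    hxy hy_sum hδ hδ₁ => ?_⟩
  have hmem (j : V) (hj : j ∈ C) (i : V) (hij : G.Adj j i) : i ∈ F :=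
    (hG j i hij).elim (fun h => absurd hj (disjoint_left.1 hFC h.1)) fun h => h.2
  have hfrac : IsFractional G F C c x y :=
    ⟨hmem, fun p => (hc p).le, hmono, fun i j p => (hx i j p).1, fun i p => (hy i p).1, hadj,
      hcovered, hcap, hxy, hy_sum⟩
  obtain ⟨xh, K, L, S, T, Cdel, Cblue, Cred, J, h⟩ := strong_decomposition_general hfrac hδ hδ₁.le
  exact ⟨xh, K, L, S, T, Cdel, Cblue, Cred, J, h.xhat_bounds, h.disjoint_core, h.disjoint_full,
    h.disjoint_core_full, h.biUnion_eq, h.disjoint_del_blue, h.disjoint_del_red,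
    h.disjoint_blue_red, h.union_eq, h.red_nonempty, h.disjoint_red, h.biUnion_red_eq,
    h.deletable, h.edist_full_le, h.mem_full_of_adj, h.edist_core_le, h.isRoundable, h.le_sum⟩
end

section
/- Let B be a bipartite graph with finite parts C (clients) and S (facility slots), and let κ : S → ℝ_{≥0}. Suppose there exists x : C × S → [0,1] with x(j,s) > 0 only when {j,s} is an edge of B, Σ_{s∈S} x(j,s) ≥ 1 for every j ∈ C, and Σ_{j∈C} x(j,s) ≤ κ(s) for every s ∈ S. Then there exists a function φ : C → S such that {j, φ(j)} is an edge of B for every j ∈ C and |φ⁻¹(s)| ≤ ⌈κ(s)⌉ for every s ∈ S. -/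
open Finset

/-! Replace each slot `s` by `⌈κ s⌉` unit copies and apply Hall's marriage theorem. Hall's condition
holds for a finite set `A` of clients because the fractional assignment has mass at least `#A` on
`A`, and all of it is carried by the neighbours of `A`, each of which holds at most `κ s`. -/

theorem exists_choice_encard_fiber_le_of_card_le_sum_biUnion {ι α : Type*} [DecidableEq α]
    (t : ι → Finset α) (c : α → ℕ) (h : ∀ A : Finset ι, #A ≤ ∑ a ∈ A.biUnion t, c a) :
    ∃ φ : ι → α, (∀ i, φ i ∈ t i) ∧ ∀ a, (φ ⁻¹' {a}).encard ≤ c a := by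
  have hall (A : Finset ι) : #A ≤ #(A.biUnion fun i => (t i).sigma fun a => range (c a)) := by
    have copies : (A.biUnion fun i => (t i).sigma fun a => range (c a)) =
        (A.biUnion t).sigma fun a => range (c a) := by
      ext ⟨a, k⟩
      simp only [mem_biUnion, mem_sigma]
      tauto
    simpa only [copies, card_sigma, card_range] using h A
  obtain ⟨f, f_inj, hf⟩ := (all_card_le_biUnion_card_iff_exists_injective _).1 hall
  simp only [mem_sigma, mem_range] at hf
  refine ⟨fun i => (f i).1, fun i => (hf i).1, fun a => ?_⟩
  have copy_mapsTo : Set.MapsTo (fun i => (f i).2) ((fun i => (f i).1) ⁻¹' {a}) (range (c a)) := by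
    rintro i rfl
    exact mem_range.2 (hf i).2
  have copy_injOn : Set.InjOn (fun i => (f i).2) ((fun i => (f i).1) ⁻¹' {a}) :=
    fun i hi j hj hij => f_inj (Sigma.ext (hi.trans hj.symm) (heq_of_eq hij))
  simpa only [Set.encard_coe_eq_coe_finsetCard, card_range] using
    Set.encard_le_encard_of_injOn copy_mapsTo copy_injOn

theorem card_le_sum_biUnion_of_one_le_sum_of_sum_le {ι α R : Type*} [DecidableEq α] [Semiring R]
    [PartialOrder R] [IsStrictOrderedRing R] {A : Finset ι} {t : ι → Finset α} {c : α → ℕ}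
    {x : ι → α → R} (hcover : ∀ i ∈ A, 1 ≤ ∑ a ∈ t i, x i a)
    (hcap : ∀ a ∈ A.biUnion t, ∑ i ∈ A with a ∈ t i, x i a ≤ c a) :
    #A ≤ ∑ a ∈ A.biUnion t, c a := by
  have : (#A : R) ≤ ∑ a ∈ A.biUnion t, (c a : R) :=
    calc (#A : R) = ∑ i ∈ A, 1 := by rw [sum_const, nsmul_one]
      _ ≤ ∑ i ∈ A, ∑ a ∈ t i, x i a := sum_le_sum hcover
      _ = ∑ a ∈ A.biUnion t, ∑ i ∈ A with a ∈ t i, x i a :=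
        sum_comm' (by grind)
      _ ≤ ∑ a ∈ A.biUnion t, (c a : R) := sum_le_sum hcap
  exact_mod_cast this

theorem sum_le_sum_filter_pos {α M : Type*} [AddCommMonoid M] [LinearOrder M]
    [AddLeftMono M] (s : Finset α) (f : α → M) :
    ∑ a ∈ s, f a ≤ ∑ a ∈ s with 0 < f a, f a :=
  sum_le_sum_of_subset_of_nonpos' (filter_subset _ s) (by simp +contextual)

theorem fractional_to_integral_assignment_general {ι α R : Type*} [Nonempty (ι → α)] [Semiring R]
    [LinearOrder R] [IsStrictOrderedRing R] [FloorSemiring R] (r : ι → α → Prop) (C : Set ι)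
    (S : Set α) (κ : α → R) (x : ι → α → R)
    (hsupp : ∀ j ∈ C, ∀ s ∈ S, 0 < x j s → r j s)
    (hcover : ∀ j ∈ C, ∃ N : Finset α, ↑N ⊆ S ∧ 1 ≤ ∑ s ∈ N, x j s)
    (hcap : ∀ s ∈ S, ∀ A : Finset ι, ↑A ⊆ C → ∑ j ∈ A, x j s ≤ κ s) :
    ∃ φ : ι → α, (∀ j ∈ C, φ j ∈ S ∧ r j (φ j)) ∧
      ∀ s, {j ∈ C | φ j = s}.encard ≤ ⌈κ s⌉₊ := by
  classical
  choose N hNS hN using fun j : C => hcover j j.2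
  let t (j : C) : Finset α := {s ∈ N j | 0 < x j s}
  have htS (j : C) (s : α) (hs : s ∈ t j) : s ∈ S := hNS j (mem_of_mem_filter s hs)
  have load_le_ceil (A : Finset C) (s : α) (hs : s ∈ A.biUnion t) :
      ∑ j ∈ A with s ∈ t j, x j s ≤ ⌈κ s⌉₊ := by
    obtain ⟨j, -, hj⟩ := mem_biUnion.1 hs
    have load_le_capacity := hcap s (htS j s hj)
      ({j ∈ A | s ∈ t j}.map (.subtype (· ∈ C))) (by simp)
    rw [sum_map] at load_le_capacity
    exact load_le_capacity.trans (Nat.le_ceil _)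
  obtain ⟨φ, hφt, hφ⟩ := exists_choice_encard_fiber_le_of_card_le_sum_biUnion t (⌈κ ·⌉₊) fun A =>
    card_le_sum_biUnion_of_one_le_sum_of_sum_le
      (fun j _ => (hN j).trans (sum_le_sum_filter_pos (N j) (x j))) (load_le_ceil A)
  obtain ⟨φ₀⟩ := ‹Nonempty (ι → α)›
  have extend_eq (j : C) : Function.extend Subtype.val φ φ₀ j = φ j :=
    Subtype.val_injective.extend_apply φ φ₀ j
  refine ⟨Function.extend Subtype.val φ φ₀, fun j hj => ?_, fun s => ?_⟩
  · rw [extend_eq ⟨j, hj⟩]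
    have hS := htS _ _ (hφt ⟨j, hj⟩)
    exact ⟨hS, hsupp j hj _ hS (mem_filter.1 (hφt ⟨j, hj⟩)).2⟩
  · change (C ∩ Function.extend Subtype.val φ φ₀ ⁻¹' {s}).encard ≤ _
    rw [← Subtype.image_preimage_coe, Subtype.val_injective.encard_image, ← Set.preimage_comp,
      Function.extend_comp Subtype.val_injective]
    exact hφ s

/-- Integrality of the bipartite assignment step: if a bipartite graph with client part `C`
and facility-slot part `S` admits a fractional assignment `x` supported on edges, covering
every client and loading every slot `s` at most `κ s`, then there is an integral assignment
`φ` along edges in which every slot `s` receives at most `⌈κ s⌉` clients. -/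
theorem fractional_to_integral_assignment
    {V : Type*} [DecidableEq V] (B : SimpleGraph V) (C S : Finset V)
    (hCS : Disjoint C S)
    (hbip : ∀ a b : V, B.Adj a b → (a ∈ C ∧ b ∈ S) ∨ (a ∈ S ∧ b ∈ C))
    (κ : V → ℝ) (hκ : ∀ s ∈ S, 0 ≤ κ s)
    (x : V → V → ℝ)
    (hx01 : ∀ j ∈ C, ∀ s ∈ S, 0 ≤ x j s ∧ x j s ≤ 1)
    (hsupp : ∀ j ∈ C, ∀ s ∈ S, 0 < x j s → B.Adj j s)
    (hcover : ∀ j ∈ C, 1 ≤ ∑ s ∈ S, x j s)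
    (hcap : ∀ s ∈ S, ∑ j ∈ C, x j s ≤ κ s) :
    ∃ φ : V → V,
      (∀ j ∈ C, φ j ∈ S ∧ B.Adj j (φ j)) ∧
      (∀ s ∈ S, (C.filter (fun j => φ j = s)).card ≤ ⌈κ s⌉₊) := by
  have : Nonempty (V → V) := ⟨id⟩
  obtain ⟨φ, hφ, hcard⟩ := fractional_to_integral_assignment_general B.Adj C S κ x hsupp
    (fun j hj => ⟨S, subset_rfl, hcover j hj⟩) fun s hs A hA =>
      (sum_le_sum_of_subset_of_nonneg hA fun j hj _ => (hx01 j hj s hs).1).trans (hcap s hs)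
  exact ⟨φ, hφ, fun s _ => by exact_mod_cast (coe_filter (φ · = s) C) ▸ hcard s⟩
end

section
/- Let (X,d) be a metric space, let C ⊆ X be a finite set of clients and F a finite set of facility locations, let capacity types p ∈ {1,…,P} have capacities c_p > 0, and let ȳ_{ip} ∈ {0,1} for i ∈ F, p ∈ [P]. Let C_del ⊊ C be (τ,ρ)-deletable (with respect to the metric d). Suppose x'_{ijp} ∈ [0,1], defined for j ∈ C∖C_del, i ∈ F, p ∈ [P], satisfies: Σ_{i,p} x'_{ijp} ≥ 1 for every j ∈ C∖C_del; Σ_{j∈C∖C_del} x'_{ijp} ≤ b·c_p·ȳ_{ip} for all i,p; and x'_{ijp} > 0 only if d(i,j) ≤ a. Then there exists x_{ijp} ≥ 0 defined for all j ∈ C, agreeing with x' on C∖C_del, such that Σ_{i,p} x_{ijp} ≥ 1 for every j ∈ C, Σ_{j∈C} x_{ijp} ≤ b·(1+ρ)·c_p·ȳ_{ip} for all i,p, and x_{ijp} > 0 only if d(i,j) ≤ a + τ. -/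
open Finset

/-!
Each deleted client `j` hands a fraction `w j j'` of its demand to the surviving client `j'`, which
serves it the way it serves its own. An averaging argument over the row of `j` shows that `j` is
fully covered; since the column of `j'` sums to at most `ρ`, the load bound of every facility grows
by a factor of `1 + ρ`; and each detour through `j'` costs at most `τ` by the triangle inequality.
-/

section Reassign

variable {α R : Type*} [DecidableEq α] {w : α → α → R} {C D : Finset α} {j : α}

/-- The extension to deleted clients `j ∈ D` of a quantity `f` known on the surviving clients
`C \ D`, by the `w j`-weighted sum of its values. It serves to extend an assignment
one facility and capacity type at a time. -/
def reassign [NonUnitalNonAssocSemiring R] (w : α → α → R) (D C : Finset α) (f : α → R) : α → R :=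
  D.piecewise (fun j => ∑ j' ∈ C \ D, w j j' * f j') f

theorem reassign_of_mem [NonUnitalNonAssocSemiring R] (hj : j ∈ D) (f : α → R) :
    reassign w D C f j = ∑ j' ∈ C \ D, w j j' * f j' :=
  D.piecewise_eq_of_mem _ _ hj

theorem reassign_of_notMem [NonUnitalNonAssocSemiring R] (hj : j ∉ D) (f : α → R) :
    reassign w D C f j = f j :=
  D.piecewise_eq_of_notMem _ _ hj

theorem reassign_sum [NonUnitalNonAssocSemiring R] {ι : Type*} (s : Finset ι) (f : ι → α → R) :
    reassign w D C (fun j => ∑ i ∈ s, f i j) j = ∑ i ∈ s, reassign w D C (f i) j := by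
  by_cases hj : j ∈ D
  · simp only [reassign_of_mem hj, mul_sum]
    exact sum_comm
  · simp only [reassign_of_notMem hj]

theorem le_reassign [Semiring R] [PartialOrder R] [IsOrderedRing R] {f : α → R} {m : R}
    (hw : ∀ j ∈ D, ∀ j' ∈ C \ D, 0 ≤ w j j') (hrow : ∀ j ∈ D, ∑ j' ∈ C \ D, w j j' = 1)
    (hf : ∀ j ∈ C \ D, m ≤ f j) (hj : j ∈ C) : m ≤ reassign w D C f j := by
  by_cases hjD : j ∈ D
  · calc
      m = ∑ j' ∈ C \ D, w j j' * m := by rw [← sum_mul, hrow j hjD, one_mul]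
      _ ≤ ∑ j' ∈ C \ D, w j j' * f j' :=
        sum_le_sum fun j' hj' => mul_le_mul_of_nonneg_left (hf j' hj') (hw j hjD j' hj')
      _ = reassign w D C f j := (reassign_of_mem hjD f).symm
  · rw [reassign_of_notMem hjD]
    exact hf j (mem_sdiff.2 ⟨hj, hjD⟩)

theorem sum_reassign_le [Semiring R] [PartialOrder R] [IsOrderedRing R] {f : α → R} {ρ : R}
    (hDC : D ⊆ C) (hcol : ∀ j' ∈ C \ D, ∑ j ∈ D, w j j' ≤ ρ) (hf : ∀ j ∈ C \ D, 0 ≤ f j) :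
    ∑ j ∈ C, reassign w D C f j ≤ (1 + ρ) * ∑ j ∈ C \ D, f j := by
  have surviving : ∑ j ∈ C \ D, reassign w D C f j = ∑ j ∈ C \ D, f j :=
    sum_congr rfl fun j hj => reassign_of_notMem (mem_sdiff.1 hj).2 f
  have deleted : ∑ j ∈ D, reassign w D C f j ≤ ρ * ∑ j ∈ C \ D, f j := calc
    ∑ j ∈ D, reassign w D C f j = ∑ j ∈ D, ∑ j' ∈ C \ D, w j j' * f j' :=
      sum_congr rfl fun j hj => reassign_of_mem hj f
    _ = ∑ j' ∈ C \ D, (∑ j ∈ D, w j j') * f j' := by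
      simp only [sum_mul]
      exact sum_comm
    _ ≤ ∑ j' ∈ C \ D, ρ * f j' :=
      sum_le_sum fun j' hj' => mul_le_mul_of_nonneg_right (hcol j' hj') (hf j' hj')
    _ = ρ * ∑ j ∈ C \ D, f j := (mul_sum _ _ _).symm
  rw [← sum_sdiff hDC, surviving, add_mul, one_mul]
  gcongr

theorem exists_pos_of_reassign_pos [Semiring R] [LinearOrder R] [IsStrictOrderedRing R] {f : α → R}
    (hw : ∀ j' ∈ C \ D, 0 ≤ w j j') (hf : ∀ j' ∈ C \ D, 0 ≤ f j') (hj : j ∈ D)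
    (hpos : 0 < reassign w D C f j) : ∃ j' ∈ C \ D, 0 < w j j' ∧ 0 < f j' := by
  rw [reassign_of_mem hj] at hpos
  obtain ⟨j', hj', hmul⟩ : ∃ j' ∈ C \ D, 0 < w j j' * f j' :=
    exists_lt_of_sum_lt (by simpa only [sum_const_zero] using hpos)
  exact ⟨j', hj', pos_of_mul_pos_left hmul (hf j' hj'), pos_of_mul_pos_right hmul (hw j' hj')⟩

end Reassign

section Assignment

variable {X T : Type*} [PseudoMetricSpace X]

/-- The weights `w` witness that `D` is a `(τ, ρ)`-deletable subset of the client set `C`. The upper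
bound `w j j' ≤ 1` is omitted, as it follows from `nonneg` and `row_sum`. -/
structure IsDeletionWeight [DecidableEq X] (D C : Finset X) (τ ρ : ℝ) (w : X → X → ℝ) : Prop where
  subset : D ⊆ C
  nonneg : ∀ j ∈ D, ∀ j' ∈ C \ D, 0 ≤ w j j'
  row_sum : ∀ j ∈ D, ∑ j' ∈ C \ D, w j j' = 1
  col_sum_le : ∀ j' ∈ C \ D, ∑ j ∈ D, w j j' ≤ ρ
  dist_le : ∀ j ∈ D, ∀ j' ∈ C \ D, 0 < w j j' → dist j j' ≤ τ

/-- `x i j p`, the extent to which client `j ∈ C` is served by the facility at `i ∈ F` with capacity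
type `p`, defines a fractional assignment that covers every client, within distance `r`, under load
bounds `cap i p`. Opening variables are absorbed into `cap`, and a client may be covered more than
once. -/
structure IsFractionalAssignment [Fintype T] (F C : Finset X) (cap : X → T → ℝ) (r : ℝ)
    (x : X → X → T → ℝ) : Prop where
  nonneg : ∀ i ∈ F, ∀ j ∈ C, ∀ p, 0 ≤ x i j p
  one_le_sum : ∀ j ∈ C, 1 ≤ ∑ i ∈ F, ∑ p, x i j p
  sum_le : ∀ i ∈ F, ∀ p, ∑ j ∈ C, x i j p ≤ cap i p
  dist_le : ∀ i ∈ F, ∀ j ∈ C, ∀ p, 0 < x i j p → dist i j ≤ r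

theorem IsDeletionWeight.dist_le_of_reassign_pos [DecidableEq X] {D C : Finset X} {τ ρ a : ℝ}
    {w : X → X → ℝ} (hw : IsDeletionWeight D C τ ρ w) (hτ : 0 ≤ τ) {f : X → ℝ} {i j : X}
    (hf : ∀ j ∈ C \ D, 0 ≤ f j) (hdist : ∀ j ∈ C \ D, 0 < f j → dist i j ≤ a) (hj : j ∈ C)
    (hpos : 0 < reassign w D C f j) : dist i j ≤ a + τ := by
  by_cases hjD : j ∈ D
  · obtain ⟨j', hj', hwpos, hfpos⟩ := exists_pos_of_reassign_pos (hw.nonneg j hjD) hf hjD hpos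
    calc
      dist i j ≤ dist i j' + dist j j' := dist_triangle_right i j j'
      _ ≤ a + τ := add_le_add (hdist j' hj' hfpos) (hw.dist_le j hjD j' hj' hwpos)
  · rw [reassign_of_notMem hjD] at hpos
    exact le_add_of_le_of_nonneg (hdist j (mem_sdiff.2 ⟨hj, hjD⟩) hpos) hτ

theorem isFractionalAssignment_reassign [DecidableEq X] [Fintype T] {F D C : Finset X}
    {cap : X → T → ℝ} {a τ ρ : ℝ} {w : X → X → ℝ} {x : X → X → T → ℝ}
    (hx : IsFractionalAssignment F (C \ D) cap a x) (hw : IsDeletionWeight D C τ ρ w)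
    (hτ : 0 ≤ τ) (hρ : 0 ≤ ρ) :
    IsFractionalAssignment F C (fun i p => (1 + ρ) * cap i p) (a + τ)
      (fun i j p => reassign w D C (x i · p) j) where
  nonneg i hi j hj p := le_reassign hw.nonneg hw.row_sum (fun j' hj' => hx.nonneg i hi j' hj' p) hj
  one_le_sum j hj := by
    simp only [← reassign_sum]
    exact le_reassign hw.nonneg hw.row_sum hx.one_le_sum hj
  sum_le i hi p := calc
    ∑ j ∈ C, reassign w D C (x i · p) j ≤ (1 + ρ) * ∑ j ∈ C \ D, x i j p :=
      sum_reassign_le hw.subset hw.col_sum_le fun j hj => hx.nonneg i hi j hj p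
    _ ≤ (1 + ρ) * cap i p :=
      mul_le_mul_of_nonneg_left (hx.sum_le i hi p) (add_nonneg zero_le_one hρ)
  dist_le i hi j hj p := hw.dist_le_of_reassign_pos hτ (fun j' hj' => hx.nonneg i hi j' hj' p)
    (fun j' hj' => hx.dist_le i hi j' hj' p) hj

theorem extend_deleted_clients_general [DecidableEq X] [Fintype T] {F D C : Finset X}
    {cap : X → T → ℝ} {a τ ρ : ℝ} {w : X → X → ℝ} {x' : X → X → T → ℝ}
    (hw : IsDeletionWeight D C τ ρ w) (hx' : IsFractionalAssignment F (C \ D) cap a x')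
    (hτ : 0 ≤ τ) (hρ : 0 ≤ ρ) :
    ∃ x, IsFractionalAssignment F C (fun i p => (1 + ρ) * cap i p) (a + τ) x ∧
      ∀ i, ∀ j ∈ C \ D, ∀ p, x i j p = x' i j p :=
  ⟨_, isFractionalAssignment_reassign hx' hw hτ hρ,
    fun _ _ hj _ => reassign_of_notMem (mem_sdiff.1 hj).2 _⟩

end Assignment

/-- Re-inserting a `(τ, ρ)`-deletable client set: a partial fractional assignment `x'` of the
surviving clients `C ∖ C_del`, with radius bound `a` and capacity bound `b · c_p` at each
integrally opened facility, extends to a fractional assignment of all of `C` with radius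
bound `a + τ` and capacity bound `b·(1+ρ)·c_p`. -/
theorem extend_deleted_clients
    {X : Type*} [MetricSpace X] [DecidableEq X] (F C : Finset X) (P : ℕ)
    (c : Fin P → ℝ) (hc : ∀ p, 0 < c p)
    (yb : X → Fin P → ℝ) (hyb : ∀ i p, yb i p = 0 ∨ yb i p = 1)
    (Cdel : Finset X) (hss : Cdel ⊂ C)
    (a b τ ρ : ℝ) (ha : 0 ≤ a) (hb : 0 ≤ b) (hτ : 0 ≤ τ) (hρ : 0 ≤ ρ)
    -- `C_del` is `(τ, ρ)`-deletable with respect to the metric `d`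
    (w : X → X → ℝ)
    (hw01 : ∀ j j', 0 ≤ w j j' ∧ w j j' ≤ 1)
    (hwrow : ∀ j ∈ Cdel, ∑ j' ∈ C \ Cdel, w j j' = 1)
    (hwcol : ∀ j' ∈ C \ Cdel, ∑ j ∈ Cdel, w j j' ≤ ρ)
    (hwdist : ∀ j ∈ Cdel, ∀ j' ∈ C \ Cdel, 0 < w j j' → dist j j' ≤ τ)
    -- the partial fractional assignment `x'` of the surviving clients
    (x' : X → X → Fin P → ℝ)
    (hx'01 : ∀ i ∈ F, ∀ j ∈ C \ Cdel, ∀ p, 0 ≤ x' i j p ∧ x' i j p ≤ 1)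
    (hcov' : ∀ j ∈ C \ Cdel, 1 ≤ ∑ i ∈ F, ∑ p, x' i j p)
    (hcap' : ∀ i ∈ F, ∀ p, ∑ j ∈ C \ Cdel, x' i j p ≤ b * c p * yb i p)
    (hrad' : ∀ i ∈ F, ∀ j ∈ C \ Cdel, ∀ p, 0 < x' i j p → dist i j ≤ a) :
    ∃ x : X → X → Fin P → ℝ,
      (∀ i ∈ F, ∀ j ∈ C, ∀ p, 0 ≤ x i j p) ∧
      (∀ i ∈ F, ∀ j ∈ C \ Cdel, ∀ p, x i j p = x' i j p) ∧
      (∀ j ∈ C, 1 ≤ ∑ i ∈ F, ∑ p, x i j p) ∧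
      (∀ i ∈ F, ∀ p, ∑ j ∈ C, x i j p ≤ b * (1 + ρ) * c p * yb i p) ∧
      (∀ i ∈ F, ∀ j ∈ C, ∀ p, 0 < x i j p → dist i j ≤ a + τ) := by
  obtain ⟨x, hx, hagree⟩ := extend_deleted_clients_general
    ⟨hss.subset, fun j _ j' _ => (hw01 j j').1, hwrow, hwcol, hwdist⟩
    ⟨fun i hi j hj p => (hx'01 i hi j hj p).1, hcov', hcap', hrad'⟩ hτ hρ
  exact ⟨x, hx.nonneg, fun i _ => hagree i, hx.one_le_sum,
    fun i hi p => (hx.sum_le i hi p).trans_eq (by ring), hx.dist_le⟩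
end

section
/- Let P be a positive integer, let y_1,…,y_P ≥ 0 be reals and k_1,…,k_P ∈ ℕ with y_p ≤ k_p for every p, and let s_1,…,s_P ∈ ℕ satisfy Σ_{q ≥ p} s_q ≤ ⌊Σ_{q ≥ p} y_q⌋ for every p ∈ {1,…,P}. Then there exist s̃_1,…,s̃_P ∈ ℕ such that for every p: (a) Σ_{q ≥ p} s_q ≤ Σ_{q ≥ p} s̃_q ≤ Σ_{q ≥ p} y_q, and (b) s̃_p ≤ k_p. -/
/-!
The suffix sums `Y p = ∑ q ≥ p, y q` can be rounded down all at once: setting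
`s̃ p = ⌊Y p⌋ - ⌊Y (p + 1)⌋`, the suffix sums of `s̃` telescope to `⌊Y p⌋`, the largest value the
upper bound `Y p` allows. Since `k p` is an integer, it can be pulled out of the floor in
`⌊Y p⌋ ≤ ⌊Y (p + 1) + k p⌋`, which gives `s̃ p ≤ k p`.
-/

open Finset

theorem eq_Ioi_of_isUpperSet_insert {α : Type*} [Preorder α] [LocallyFiniteOrderTop α]
    [DecidableEq α] {a : α} {U : Finset α} (ha : ∀ x ∈ U, a < x)
    (hU : IsUpperSet ((insert a U : Finset α) : Set α)) : U = Ioi a := by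
  ext x
  rw [mem_Ioi]
  refine ⟨ha x, fun hax => ?_⟩
  exact mem_of_mem_insert_of_ne (hU hax.le (mem_insert_self a U)) hax.ne'

section SuffixRounding

variable {α R : Type*} [LinearOrder α] [LocallyFiniteOrderTop α]
  [Semiring R] [LinearOrder R] [FloorSemiring R]

/-- The rounding of `y` to natural numbers whose suffix sums are the floors of those of `y`: the
increments of the floored suffix sums. The strict suffix `Ioi p` plays the role of "the suffix from
`p + 1`", so that no successor function is needed. The subtraction does not truncate when `y` is
nonnegative. -/
def suffixRounding (y : α → R) (p : α) : ℕ :=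
  ⌊∑ q ∈ Ici p, y q⌋₊ - ⌊∑ q ∈ Ioi p, y q⌋₊

variable [IsStrictOrderedRing R] {y : α → R}

theorem sum_suffixRounding_of_isUpperSet (hy : ∀ p, 0 ≤ y p) {U : Finset α}
    (hU : IsUpperSet (U : Set α)) :
    ∑ q ∈ U, suffixRounding y q = ⌊∑ q ∈ U, y q⌋₊ := by
  induction U using Finset.induction_on_min with
  | empty => simp
  | insert a U ha ih =>
    obtain rfl := eq_Ioi_of_isUpperSet_insert ha hU
    have floor_mono : ⌊∑ q ∈ Ioi a, y q⌋₊ ≤ ⌊∑ q ∈ Ici a, y q⌋₊ :=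
      Nat.floor_le_floor <| by
        rw [← add_sum_Ioi_eq_sum_Ici]
        exact le_add_of_nonneg_left (hy a)
    rw [Ioi_insert, ← add_sum_Ioi_eq_sum_Ici, ih (by simpa using isUpperSet_Ioi a)]
    exact Nat.sub_add_cancel floor_mono

theorem sum_Ici_suffixRounding (hy : ∀ p, 0 ≤ y p) (p : α) :
    ∑ q ∈ Ici p, suffixRounding y q = ⌊∑ q ∈ Ici p, y q⌋₊ :=
  sum_suffixRounding_of_isUpperSet hy (by simpa using isUpperSet_Ici p)

theorem suffixRounding_le (hy : ∀ p, 0 ≤ y p) {p : α} {k : ℕ} (hk : y p ≤ k) :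
    suffixRounding y p ≤ k := by
  have tail_nonneg : 0 ≤ ∑ q ∈ Ioi p, y q := sum_nonneg fun q _ => hy q
  rw [suffixRounding, Nat.sub_le_iff_le_add']
  calc ⌊∑ q ∈ Ici p, y q⌋₊
      = ⌊(∑ q ∈ Ioi p, y q) + y p⌋₊ := by rw [sum_Ioi_add_eq_sum_Ici]
    _ ≤ ⌊(∑ q ∈ Ioi p, y q) + k⌋₊ := by gcongr
    _ = ⌊∑ q ∈ Ioi p, y q⌋₊ + k := Nat.floor_add_natCast tail_nonneg k

theorem suffix_mass_movement_general (hy : ∀ p, 0 ≤ y p) {k : α → ℕ} (hyk : ∀ p, y p ≤ k p)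
    {s : α → ℕ} (hs : ∀ p, ∑ q ∈ Ici p, s q ≤ ⌊∑ q ∈ Ici p, y q⌋₊) :
    ∃ st : α → ℕ,
      (∀ p, ∑ q ∈ Ici p, s q ≤ ∑ q ∈ Ici p, st q) ∧
      (∀ p, ((∑ q ∈ Ici p, st q : ℕ) : R) ≤ ∑ q ∈ Ici p, y q) ∧
      (∀ p, st p ≤ k p) := by
  refine ⟨suffixRounding y, fun p => ?_, fun p => ?_, fun p => suffixRounding_le hy (hyk p)⟩
  · exact (hs p).trans_eq (sum_Ici_suffixRounding hy p).symm
  · rw [sum_Ici_suffixRounding hy]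
    exact Nat.floor_le (sum_nonneg fun q _ => hy q)

end SuffixRounding

/-- Mass-movement claim: given reals `y p ≥ 0` with `y p ≤ k p` and naturals `s p` whose
suffix sums are dominated by the floors of the suffix sums of `y`, there are naturals
`s̃ p ≤ k p` whose suffix sums are sandwiched between the suffix sums of `s` and of `y`. -/
theorem suffix_mass_movement (P : ℕ) (hP : 0 < P)
    (y : Fin P → ℝ) (hy : ∀ p, 0 ≤ y p)
    (k : Fin P → ℕ) (hyk : ∀ p, y p ≤ (k p : ℝ))
    (s : Fin P → ℕ)
    (hs : ∀ p : Fin P,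
      ∑ q ∈ Finset.univ.filter (fun q => p ≤ q), s q ≤
        ⌊∑ q ∈ Finset.univ.filter (fun q => p ≤ q), y q⌋₊) :
    ∃ st : Fin P → ℕ,
      (∀ p : Fin P,
        ∑ q ∈ Finset.univ.filter (fun q => p ≤ q), s q ≤
          ∑ q ∈ Finset.univ.filter (fun q => p ≤ q), st q) ∧
      (∀ p : Fin P,
        ((∑ q ∈ Finset.univ.filter (fun q => p ≤ q), st q : ℕ) : ℝ) ≤
          ∑ q ∈ Finset.univ.filter (fun q => p ≤ q), y q) ∧
      (∀ p, st p ≤ k p) := by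
  simp only [filter_le_eq_Ici] at hs ⊢
  exact suffix_mass_movement_general hy hyk hs
end

section
/- Let G be a bipartite graph with finite parts F and C, let capacity types p ∈ {1,…,P} have capacities c_p > 0, and let (x,y) satisfy (L1), (L2), (L4) with x supported on edges of G. Let T_1,…,T_m ⊆ F be pairwise disjoint and J_1,…,J_m ⊆ C nonempty and pairwise disjoint such that for every ℓ, every G-neighbor of a vertex of J_ℓ lies in T_ℓ. Define D_ℓ := |J_ℓ|, s_p := Σ_{i ∈ T_1∪⋯∪T_m} y_{ip}, and z_{ℓ,p} := Σ_{i∈T_ℓ} y_{ip}. Then z satisfies the assignment-LP constraints: Σ_{ℓ=1}^m z_{ℓ,p} ≤ s_p for every p, and Σ_{p=1}^P z_{ℓ,p}·min(c_p, D_ℓ) ≥ D_ℓ for every ℓ. -/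
open Finset

/-!
Every client of `J_ℓ` is served entirely from `T_ℓ`, since all its neighbors lie there. On the
clients of `J_ℓ`, type `p` at facility `i` spends at most `c_p y_{ip}` by (L2), and at most
`D_ℓ y_{ip}` by summing (L4) over the `D_ℓ` clients, hence at most `y_{ip} min(c_p, D_ℓ)`. Summing
over `T_ℓ` and all types bounds the total service `D_ℓ`.
-/

lemma sum_le_mul_min_card {κ R : Type*} [CommSemiring R] [LinearOrder R] [IsOrderedRing R]
    {J : Finset κ} {f : κ → R} {a b : R} (hb : 0 ≤ b) (hsum : ∑ j ∈ J, f j ≤ a * b)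
    (hf : ∀ j ∈ J, f j ≤ b) :
    ∑ j ∈ J, f j ≤ b * min a (#J : R) := by
  have hcard : ∑ j ∈ J, f j ≤ #J * b := by
    simpa only [nsmul_eq_mul] using sum_le_card_nsmul J f b hf
  rw [mul_min_of_nonneg _ _ hb, mul_comm b, mul_comm b]
  exact le_min hsum hcard

lemma card_le_sum_mul_of_one_le_sum {ι κ τ R : Type*} [Fintype τ] [Semiring R] [PartialOrder R]
    [IsOrderedAddMonoid R] {T : Finset ι} {J : Finset κ} {x : ι → κ → τ → R}
    {y : ι → τ → R} {b : τ → R} (hserved : ∀ j ∈ J, 1 ≤ ∑ i ∈ T, ∑ p, x i j p)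
    (hload : ∀ i ∈ T, ∀ p, ∑ j ∈ J, x i j p ≤ y i p * b p) :
    (#J : R) ≤ ∑ p, (∑ i ∈ T, y i p) * b p :=
  calc (#J : R) ≤ ∑ j ∈ J, ∑ i ∈ T, ∑ p, x i j p := by
        simpa only [nsmul_one] using card_nsmul_le_sum J _ 1 hserved
    _ = ∑ i ∈ T, ∑ p, ∑ j ∈ J, x i j p := by
        rw [sum_comm]
        exact sum_congr rfl fun _ _ => sum_comm
    _ ≤ ∑ i ∈ T, ∑ p, y i p * b p :=
        sum_le_sum fun i hi => sum_le_sum fun p _ => hload i hi p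
    _ = ∑ p, (∑ i ∈ T, y i p) * b p := by
        rw [sum_comm]
        simp only [sum_mul]

section FractionalAssignment

variable {ι κ τ R : Type*} [Fintype τ] [CommSemiring R] [LinearOrder R]

/-- The assignment LP for machine capacities `c`, demands `D` and supplies `s`: the fractional
numbers `z ℓ p` of machines of type `p` given to `ℓ` respect the supplies and cover the demands,
each machine counting for at most the demand it helps to cover. -/
structure IsAssignmentLPFeasible {Λ : Type*} [Fintype Λ]
    (c : τ → R) (D : Λ → R) (s : τ → R) (z : Λ → τ → R) : Prop where
  sum_le_supply : ∀ p, ∑ ℓ, z ℓ p ≤ s p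
  demand_le_sum : ∀ ℓ, D ℓ ≤ ∑ p, z ℓ p * min (c p) (D ℓ)

/-- Fractional solutions of the capacitated facility location constraints (L1), (L2), (L4) with
facilities `F` and clients `C`: `y i p` is the opening of type `p` at facility `i`, and `x i j p`
the service it gives to client `j`. The edges of the bipartite graph are encoded as a relation `E`
from facilities to clients, and several facilities of one type may be opened at the same place, so
`x` and `y` are not bounded by `1`. -/
structure IsFractionalAssignment_s8 (E : ι → κ → Prop) (F : Finset ι) (C : Finset κ)
    (c : τ → R) (x : ι → κ → τ → R) (y : ι → τ → R) : Prop where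
  service_nonneg : ∀ i ∈ F, ∀ j ∈ C, ∀ p, 0 ≤ x i j p
  opening_nonneg : ∀ i ∈ F, ∀ p, 0 ≤ y i p
  edge_of_service_pos : ∀ i ∈ F, ∀ j ∈ C, ∀ p, 0 < x i j p → E i j
  one_le_sum_service : ∀ j ∈ C, 1 ≤ ∑ i ∈ F, ∑ p, x i j p
  sum_service_le_capacity : ∀ i ∈ F, ∀ p, ∑ j ∈ C, x i j p ≤ c p * y i p
  service_le_opening : ∀ i ∈ F, ∀ j ∈ C, ∀ p, x i j p ≤ y i p

/-- `T` is a complete neighborhood with responsible client set `J`: it is a set of facilities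
containing every facility of `F` adjacent to a client of `J`. -/
structure IsCompleteNeighborhood (E : ι → κ → Prop) (F : Finset ι) (C : Finset κ)
    (T : Finset ι) (J : Finset κ) : Prop where
  subset_facilities : T ⊆ F
  subset_clients : J ⊆ C
  mem_of_edge : ∀ i ∈ F, ∀ j ∈ J, E i j → i ∈ T

namespace IsFractionalAssignment_s8

variable {E : ι → κ → Prop} {F T : Finset ι} {C J : Finset κ} {c : τ → R}
  {x : ι → κ → τ → R} {y : ι → τ → R}

lemma one_le_sum_service_of_isCompleteNeighborhood (h : IsFractionalAssignment_s8 E F C c x y)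
    (hT : IsCompleteNeighborhood E F C T J) {j : κ} (hj : j ∈ J) :
    1 ≤ ∑ i ∈ T, ∑ p, x i j p := by
  have hjC : j ∈ C := hT.subset_clients hj
  have service_eq_zero : ∀ i ∈ F, i ∉ T → ∑ p, x i j p = 0 := by
    intro i hi hiT
    refine sum_eq_zero fun p _ => ?_
    have not_pos : ¬ 0 < x i j p := fun hpos =>
      hiT (hT.mem_of_edge i hi j hj (h.edge_of_service_pos i hi j hjC p hpos))
    exact le_antisymm (not_lt.mp not_pos) (h.service_nonneg i hi j hjC p)
  rw [sum_subset hT.subset_facilities service_eq_zero]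
  exact h.one_le_sum_service j hjC

variable [IsOrderedRing R]

lemma sum_service_le_opening_mul_min (h : IsFractionalAssignment_s8 E F C c x y)
    {i : ι} (hi : i ∈ F) (hJ : J ⊆ C) (p : τ) :
    ∑ j ∈ J, x i j p ≤ y i p * min (c p) (#J : R) := by
  have hcap : ∑ j ∈ J, x i j p ≤ c p * y i p :=
    (sum_le_sum_of_subset_of_nonneg hJ fun j hj _ => h.service_nonneg i hi j hj p).trans
      (h.sum_service_le_capacity i hi p)
  exact sum_le_mul_min_card (h.opening_nonneg i hi p) hcap
    fun j hj => h.service_le_opening i hi j (hJ hj) p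

lemma card_le_sum_opening_mul_min (h : IsFractionalAssignment_s8 E F C c x y)
    (hT : IsCompleteNeighborhood E F C T J) :
    (#J : R) ≤ ∑ p, (∑ i ∈ T, y i p) * min (c p) (#J : R) :=
  card_le_sum_mul_of_one_le_sum
    (fun _ hj => h.one_le_sum_service_of_isCompleteNeighborhood hT hj)
    fun _ hi p =>
      h.sum_service_le_opening_mul_min (hT.subset_facilities hi) hT.subset_clients p

end IsFractionalAssignment_s8

theorem complete_neighborhoods_satisfy_assignmentLP_general {Λ : Type*} [Fintype Λ]
    [DecidableEq ι] [IsOrderedRing R] {E : ι → κ → Prop} {F : Finset ι} {C : Finset κ} {c : τ → R}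
    {x : ι → κ → τ → R} {y : ι → τ → R} (h : IsFractionalAssignment_s8 E F C c x y)
    {T : Λ → Finset ι} {J : Λ → Finset κ} (hdisj : Pairwise fun ℓ₁ ℓ₂ => Disjoint (T ℓ₁) (T ℓ₂))
    (hT : ∀ ℓ, IsCompleteNeighborhood E F C (T ℓ) (J ℓ)) :
    IsAssignmentLPFeasible c (fun ℓ => (#(J ℓ) : R)) (fun p => ∑ i ∈ univ.biUnion T, y i p)
      fun ℓ p => ∑ i ∈ T ℓ, y i p where
  sum_le_supply _ := (sum_biUnion (hdisj.set_pairwise _)).ge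
  demand_le_sum ℓ := h.card_le_sum_opening_mul_min (hT ℓ)

end FractionalAssignment

/-- For a collection of disjoint complete neighborhoods `T_ℓ` with responsible client sets
`J_ℓ`, the fractional openings `z_{ℓ,p} := Σ_{i ∈ T_ℓ} y_{ip}` satisfy the assignment-LP
constraints of the induced `Q||C_min` instance with demands `D_ℓ = |J_ℓ|` and supplies
`s_p = Σ_{i ∈ ∪T_ℓ} y_{ip}`. -/
theorem complete_neighborhoods_satisfy_assignmentLP
    {V : Type*} [DecidableEq V] (G : SimpleGraph V) (F C : Finset V)
    (P : ℕ) (c : Fin P → ℝ) (hc : ∀ p, 0 < c p)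
    (x : V → V → Fin P → ℝ) (y : V → Fin P → ℝ)
    (hx01 : ∀ i j p, 0 ≤ x i j p ∧ x i j p ≤ 1)
    (hy01 : ∀ i p, 0 ≤ y i p ∧ y i p ≤ 1)
    (hsupp : ∀ i j p, 0 < x i j p → G.Adj i j)
    (hL1 : ∀ j ∈ C, 1 ≤ ∑ i ∈ F, ∑ p, x i j p)
    (hL2 : ∀ i ∈ F, ∀ p, ∑ j ∈ C, x i j p ≤ c p * y i p)
    (hL4 : ∀ i ∈ F, ∀ j ∈ C, ∀ p, x i j p ≤ y i p)
    (m : ℕ) (T : Fin m → Finset V) (J : Fin m → Finset V)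
    (hTF : ∀ ℓ, T ℓ ⊆ F) (hJC : ∀ ℓ, J ℓ ⊆ C)
    (hTdisj : ∀ ℓ₁ ℓ₂, ℓ₁ ≠ ℓ₂ → Disjoint (T ℓ₁) (T ℓ₂))
    (hJne : ∀ ℓ, (J ℓ).Nonempty)
    (hJdisj : ∀ ℓ₁ ℓ₂, ℓ₁ ≠ ℓ₂ → Disjoint (J ℓ₁) (J ℓ₂))
    (hnbr : ∀ ℓ, ∀ j ∈ J ℓ, ∀ v : V, G.Adj j v → v ∈ T ℓ) :
    (∀ p : Fin P,
      ∑ ℓ : Fin m, ∑ i ∈ T ℓ, y i p ≤ ∑ i ∈ Finset.univ.biUnion T, y i p) ∧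
    (∀ ℓ : Fin m,
      ((J ℓ).card : ℝ) ≤
        ∑ p, (∑ i ∈ T ℓ, y i p) * min (c p) ((J ℓ).card : ℝ)) := by
  have hxy : IsFractionalAssignment_s8 G.Adj F C c x y :=
    ⟨fun i _ j _ p => (hx01 i j p).1, fun i _ p => (hy01 i p).1,
      fun i _ j _ p => hsupp i j p, hL1, hL2, hL4⟩
  have hfeas := complete_neighborhoods_satisfy_assignmentLP_general hxy
    (fun ℓ₁ ℓ₂ => hTdisj ℓ₁ ℓ₂)
    fun ℓ => ⟨hTF ℓ, hJC ℓ, fun i _ j hj hij => hnbr ℓ j hj i hij.symm⟩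
  exact ⟨hfeas.sum_le_supply, hfeas.demand_le_sum⟩
end

section
/- Let there be m machines with demands D_1,…,D_m > 0 and n job types with capacities c_1,…,c_n > 0 and integer supplies s_1,…,s_n ∈ ℕ. Suppose there exists z : {1,…,m} × {1,…,n} → ℝ_{≥0} with Σ_i z_{ij} ≤ s_j for every j and Σ_j z_{ij}·min(c_j, D_i) ≥ D_i for every i. Then there exist nonnegative integers n_{ij} with Σ_i n_{ij} ≤ s_j for every job type j and Σ_j n_{ij}·c_j ≥ D_i/2 for every machine i. -/
open Finset

/-!
Serve the machines in order of decreasing demand, treating the `s_j` copies of job type `j` as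
separate jobs. The machine `e` of largest demand receives the largest remaining jobs, one at a
time, until it has `D_e / 2`. The set `G` of these jobs has truncated capacity
`∑_{j ∈ G} min(c_j, D_e) ≤ D_e`: it is either a single job or a set of total capacity less than
`D_e / 2` together with a job of capacity at most `D_e / 2`.

The other machines must then be compensated for their fractional shares of `G`, and they get the
share of `e` in the remaining jobs, divided in proportion to what they lose, measured by
`min(c_g, D_e)`. That share is large enough because `e` gives up at least as much as `G` is worth
to it, and the exchange hurts no machine `i` because `min(c, D_i) / min(c, D_e)` is nonincreasing
in `c` and the jobs of `G` are the largest. Hence the smaller instance is again fractionally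
feasible.
-/

section OrderedSemiring

variable {κ K : Type*} [CommSemiring K] [LinearOrder K] [IsOrderedRing K]

lemma min_mul_min_le_min_mul_min {a b D E : K} (ha : 0 ≤ a) (hab : a ≤ b) (hD : 0 ≤ D)
    (hDE : D ≤ E) : min b D * min a E ≤ min b E * min a D := by
  rcases le_total a D with haD | hDa
  · rw [min_eq_left haD, min_eq_left (haD.trans hDE)]
    exact mul_le_mul_of_nonneg_right (min_le_min_left b hDE) ha
  · rw [min_eq_right hDa, min_eq_right (hDa.trans hab), mul_comm]
    exact mul_le_mul_of_nonneg_right (min_le_min_right E hab) hD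

lemma sum_mul_min_mul_sum_mul_min_le {c x y : κ → K} {G R : Finset κ} {D E : K}
    (hc : ∀ j ∈ R, 0 ≤ c j) (hD : 0 ≤ D) (hDE : D ≤ E) (hGR : ∀ g ∈ G, ∀ j ∈ R, c j ≤ c g)
    (hx : ∀ g ∈ G, 0 ≤ x g) (hy : ∀ j ∈ R, 0 ≤ y j) :
    (∑ g ∈ G, x g * min (c g) D) * ∑ j ∈ R, y j * min (c j) E ≤
      (∑ g ∈ G, x g * min (c g) E) * ∑ j ∈ R, y j * min (c j) D := by
  simp only [sum_mul_sum, mul_mul_mul_comm (x _)]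
  exact sum_le_sum fun g hg ↦ sum_le_sum fun j hj ↦ mul_le_mul_of_nonneg_left
    (min_mul_min_le_min_mul_min (hc j hj) (hGR g hg j hj) hD hDE)
    (mul_nonneg (hx g hg) (hy j hj))

end OrderedSemiring

section OrderedField

variable {κ K : Type*} [Field K] [LinearOrder K] [IsStrictOrderedRing K]

lemma sum_mul_min_le_div_mul_sum_mul_min {c x y : κ → K} {G R : Finset κ} {D E : K}
    (hc : ∀ j ∈ R, 0 ≤ c j) (hD : 0 ≤ D) (hDE : D ≤ E) (hGR : ∀ g ∈ G, ∀ j ∈ R, c j ≤ c g)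
    (hx : ∀ g ∈ G, 0 ≤ x g) (hy : ∀ j ∈ R, 0 ≤ y j)
    (hxy : ∑ g ∈ G, x g * min (c g) E ≤ ∑ j ∈ R, y j * min (c j) E) :
    ∑ g ∈ G, x g * min (c g) D ≤
      (∑ g ∈ G, x g * min (c g) E) / (∑ j ∈ R, y j * min (c j) E) *
        ∑ j ∈ R, y j * min (c j) D := by
  have hR : 0 ≤ ∑ j ∈ R, y j * min (c j) E := sum_nonneg fun j hj ↦
    mul_nonneg (hy j hj) (le_min (hc j hj) (hD.trans hDE))
  rcases hR.eq_or_lt with hzero | hpos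
  · rw [← hzero, div_zero, zero_mul]
    calc ∑ g ∈ G, x g * min (c g) D
        ≤ ∑ g ∈ G, x g * min (c g) E := sum_le_sum fun g hg ↦
          mul_le_mul_of_nonneg_left (min_le_min_left _ hDE) (hx g hg)
      _ ≤ ∑ j ∈ R, y j * min (c j) E := hxy
      _ = 0 := hzero.symm
  · rw [div_mul_eq_mul_div, le_div_iff₀ hpos]
    exact sum_mul_min_mul_sum_mul_min_le hc hD hDE hGR hx hy

variable [DecidableEq κ]

lemma sum_insert_min_le_of_sum_lt_half {c : κ → K} {D : K} (hD : 0 ≤ D)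
    {a : κ} {s : Finset κ} (ha : a ∉ s) (hmin : ∀ j ∈ s, c a ≤ c j)
    (hs : ∑ j ∈ s, c j < D / 2) : ∑ j ∈ insert a s, min (c j) D ≤ D := by
  rw [sum_insert ha]
  rcases le_or_gt (c a) (D / 2) with hsmall | hbig
  · calc min (c a) D + ∑ j ∈ s, min (c j) D
        ≤ D / 2 + D / 2 :=
          add_le_add ((min_le_left _ _).trans hsmall)
            ((sum_le_sum fun j _ ↦ min_le_left _ _).trans hs.le)
      _ = D := add_halves D
  · have hempty : s = ∅ := by
      refine eq_empty_of_forall_notMem fun x hx ↦ hs.not_ge ?_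
      have hlarge : ∀ j ∈ s, D / 2 ≤ c j := fun j hj ↦ hbig.le.trans (hmin j hj)
      exact (hlarge x hx).trans
        (single_le_sum (fun j hj ↦ (div_nonneg hD zero_le_two).trans (hlarge j hj)) hx)
    simp [hempty]

lemma exists_largest_jobs_covering_half (c : κ → K) {D : K} (hD : 0 ≤ D)
    (U : Finset κ) (hU : D / 2 ≤ ∑ j ∈ U, c j) :
    ∃ G ⊆ U, (∀ g ∈ G, ∀ j ∈ U \ G, c j ≤ c g) ∧ D / 2 ≤ ∑ j ∈ G, c j ∧
      ∑ j ∈ G, min (c j) D ≤ D := by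
  induction U using Finset.induction_on_min_value c with
  | empty => exact ⟨∅, Subset.rfl, by simp, hU, by simpa using hD⟩
  | insert a s ha hmin ih =>
    rcases le_or_gt (D / 2) (∑ j ∈ s, c j) with hs | hs
    · obtain ⟨G, hGs, htop, hhalf, htrunc⟩ := ih hs
      refine ⟨G, hGs.trans (subset_insert a s), fun g hg j hj ↦ ?_, hhalf, htrunc⟩
      rw [insert_sdiff_of_notMem _ fun haG ↦ ha (hGs haG), mem_insert] at hj
      rcases hj with rfl | hj
      · exact hmin g (hGs hg)
      · exact htop g hg j hj
    · exact ⟨insert a s, Subset.rfl, by simp, hU,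
        sum_insert_min_le_of_sum_lt_half hD ha hmin hs⟩

end OrderedField

/-- `z` is a solution of the assignment LP for the machines `M` and the jobs `U`. Each element of
`U` is a single job, so the supply bound is `1`; a job type with supply `s` is represented by `s`
elements of equal capacity. -/
structure IsFractionalAssignment_s9 {ι κ K : Type*} [Semiring K] [LinearOrder K] (c : κ → K)
    (D : ι → K) (M : Finset ι) (U : Finset κ) (z : ι → κ → K) : Prop where
  nonneg : ∀ i ∈ M, ∀ j ∈ U, 0 ≤ z i j
  supply : ∀ j ∈ U, ∑ i ∈ M, z i j ≤ 1
  demand : ∀ i ∈ M, D i ≤ ∑ j ∈ U, z i j * min (c j) (D i)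

namespace IsFractionalAssignment_s9

section Ring

variable {ι κ K : Type*} [Ring K] [LinearOrder K] [IsOrderedRing K]
  {c : κ → K} {D : ι → K} {M : Finset ι} {U G : Finset κ} {z : ι → κ → K} {e : ι}

lemma demand_le_sum_capacity (h : IsFractionalAssignment_s9 c D M U z) (hc : ∀ j, 0 ≤ c j)
    {i : ι} (hi : i ∈ M) : D i ≤ ∑ j ∈ U, c j := by
  refine (h.demand i hi).trans (sum_le_sum fun j hj ↦ ?_)
  have hz : z i j ≤ 1 :=
    (single_le_sum (fun k hk ↦ h.nonneg k hk j hj) hi).trans (h.supply j hj)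
  calc z i j * min (c j) (D i)
      ≤ z i j * c j := mul_le_mul_of_nonneg_left (min_le_left _ _) (h.nonneg i hi j hj)
    _ ≤ c j := mul_le_of_le_one_left (hc j) hz

lemma sum_sum_mul_min_le_sum_sdiff [DecidableEq ι] [DecidableEq κ]
    (h : IsFractionalAssignment_s9 c D (insert e M) U z) (hc : ∀ j, 0 ≤ c j)
    (hDe : 0 ≤ D e) (he : e ∉ M) (hGU : G ⊆ U)
    (hG : ∑ g ∈ G, min (c g) (D e) ≤ D e) :
    ∑ i ∈ M, ∑ g ∈ G, z i g * min (c g) (D e) ≤ ∑ j ∈ U \ G, z e j * min (c j) (D e) := by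
  have hshare : ∑ g ∈ G, z e g * min (c g) (D e) +
      ∑ i ∈ M, ∑ g ∈ G, z i g * min (c g) (D e) ≤ ∑ g ∈ G, min (c g) (D e) := by
    rw [← sum_insert (f := fun i ↦ ∑ g ∈ G, z i g * min (c g) (D e)) he, sum_comm]
    refine sum_le_sum fun g hg ↦ ?_
    rw [← sum_mul]
    exact mul_le_of_le_one_left (le_min (hc g) hDe) (h.supply g (hGU hg))
  have hdemand := h.demand e (mem_insert_self e M)
  rw [← sum_sdiff hGU, add_comm] at hdemand
  exact le_of_add_le_add_left (hshare.trans (hG.trans hdemand))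

end Ring

section Field

variable {ι κ K : Type*} [Field K] [LinearOrder K] [IsStrictOrderedRing K] [DecidableEq ι]
  {c : κ → K} {D : ι → K} {M : Finset ι} {U G : Finset κ} {z : ι → κ → K} {e : ι}

lemma exists_sdiff_of_largest_jobs [DecidableEq κ] (h : IsFractionalAssignment_s9 c D (insert e M) U z)
    (hc : ∀ j, 0 ≤ c j) (hD : ∀ i, 0 ≤ D i) (he : e ∉ M) (hmax : ∀ i ∈ M, D i ≤ D e)
    (hGU : G ⊆ U) (htop : ∀ g ∈ G, ∀ j ∈ U \ G, c j ≤ c g)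
    (hG : ∑ g ∈ G, min (c g) (D e) ≤ D e) :
    ∃ z', IsFractionalAssignment_s9 c D M (U \ G) z' := by
  let loss i := ∑ g ∈ G, z i g * min (c g) (D e)
  let pool := ∑ j ∈ U \ G, z e j * min (c j) (D e)
  have hz : ∀ i ∈ M, ∀ j ∈ U, 0 ≤ z i j := fun i hi ↦ h.nonneg i (mem_insert_of_mem hi)
  have hze : ∀ j ∈ U \ G, 0 ≤ z e j := fun j hj ↦
    h.nonneg e (mem_insert_self e M) j (sdiff_subset hj)
  have hloss : ∀ i ∈ M, 0 ≤ loss i := fun i hi ↦ sum_nonneg fun g hg ↦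
    mul_nonneg (hz i hi g (hGU hg)) (le_min (hc g) (hD e))
  have hpool : 0 ≤ pool := sum_nonneg fun j hj ↦
    mul_nonneg (hze j hj) (le_min (hc j) (hD e))
  have hloss_pool : ∑ i ∈ M, loss i ≤ pool :=
    h.sum_sum_mul_min_le_sum_sdiff hc (hD e) he hGU hG
  have hcompensated : ∀ i ∈ M, ∑ g ∈ G, z i g * min (c g) (D i) ≤
      loss i / pool * ∑ j ∈ U \ G, z e j * min (c j) (D i) := fun i hi ↦
    sum_mul_min_le_div_mul_sum_mul_min (fun j _ ↦ hc j) (hD i) (hmax i hi) htop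
      (fun g hg ↦ hz i hi g (hGU hg)) hze ((single_le_sum hloss hi).trans hloss_pool)
  refine ⟨fun i j ↦ z i j + loss i / pool * z e j, fun i hi j hj ↦ ?_, fun j hj ↦ ?_,
    fun i hi ↦ ?_⟩
  · exact add_nonneg (hz i hi j (sdiff_subset hj))
      (mul_nonneg (div_nonneg (hloss i hi) hpool) (hze j hj))
  · have hsupply := h.supply j (sdiff_subset hj)
    rw [sum_insert he] at hsupply
    rw [sum_add_distrib, ← sum_mul, ← sum_div]
    linarith [mul_le_of_le_one_left (hze j hj) (div_le_one_of_le₀ hloss_pool hpool)]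
  · have hdemand := h.demand i (mem_insert_of_mem hi)
    rw [← sum_sdiff hGU] at hdemand
    simp only [add_mul, sum_add_distrib, mul_assoc (loss i / pool), ← mul_sum]
    linarith [hcompensated i hi]

theorem exists_half_assignment (h : IsFractionalAssignment_s9 c D M U z) (hc : ∀ j, 0 ≤ c j)
    (hD : ∀ i, 0 ≤ D i) :
    ∃ a : κ → Option ι, ∀ i ∈ M, D i / 2 ≤ ∑ j ∈ U with a j = some i, c j := by
  classical
  induction M using Finset.induction_on_max_value D generalizing U z with
  | empty => exact ⟨fun _ ↦ none, by simp⟩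
  | insert e M he hmax ih =>
    have hU : D e / 2 ≤ ∑ j ∈ U, c j :=
      (half_le_self (hD e)).trans (h.demand_le_sum_capacity hc (mem_insert_self e M))
    obtain ⟨G, hGU, htop, hhalf, htrunc⟩ := exists_largest_jobs_covering_half c (hD e) U hU
    obtain ⟨z', hz'⟩ := h.exists_sdiff_of_largest_jobs hc hD he hmax hGU htop htrunc
    obtain ⟨a, ha⟩ := ih hz'
    refine ⟨fun j ↦ if j ∈ G then some e else a j, fun i hi ↦ ?_⟩
    rcases mem_insert.mp hi with rfl | hi
    · refine hhalf.trans (sum_le_sum_of_subset_of_nonneg (fun j hj ↦ ?_) fun j _ _ ↦ hc j)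
      simp [hj, hGU hj]
    · refine (ha i hi).trans
        (sum_le_sum_of_subset_of_nonneg (fun j hj ↦ ?_) fun j _ _ ↦ hc j)
      simp only [mem_filter, mem_sdiff] at hj ⊢
      simp [hj]

end Field

end IsFractionalAssignment_s9

section Copies

variable {ι κ K : Type*} [Fintype ι] [Fintype κ] [Field K] [LinearOrder K]
  [IsStrictOrderedRing K]

lemma isFractionalAssignment_copies {c : κ → K} {D : ι → K} {s : κ → ℕ} {z : ι → κ → K}
    (hz : ∀ i j, 0 ≤ z i j) (hsupply : ∀ j, ∑ i, z i j ≤ s j)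
    (hdemand : ∀ i, D i ≤ ∑ j, z i j * min (c j) (D i)) :
    IsFractionalAssignment_s9 (fun k : Σ j, Fin (s j) ↦ c k.1) D univ univ
      (fun i k ↦ z i k.1 / s k.1) where
  nonneg i _ k _ := div_nonneg (hz i k.1) (s k.1).cast_nonneg
  supply k _ := by
    rw [← sum_div]
    exact div_le_one_of_le₀ (hsupply k.1) (s k.1).cast_nonneg
  demand i _ := by
    have hzero : ∀ j, (s j : K) = 0 → z i j = 0 := fun j hj ↦
      le_antisymm (hj ▸ (single_le_sum (fun k _ ↦ hz k j) (mem_univ i)).trans (hsupply j))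
        (hz i j)
    refine (hdemand i).trans_eq ?_
    rw [Fintype.sum_sigma]
    refine sum_congr rfl fun j _ ↦ ?_
    dsimp only
    rw [sum_const, card_univ, Fintype.card_fin, nsmul_eq_mul, ← mul_assoc,
      mul_div_cancel_of_imp' (hzero j)]

lemma sum_card_filter_eq_some_le_card {α : Type*} [Fintype α] [DecidableEq ι]
    (a : α → Option ι) : ∑ i, #{t | a t = some i} ≤ Fintype.card α := by
  rw [← card_univ, card_eq_sum_card_fiberwise (fun t _ ↦ mem_univ (a t)), Fintype.sum_option]
  exact Nat.le_add_left _ _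

theorem assignmentLP_two_approximate_supply_general {c : κ → K} {D : ι → K} {s : κ → ℕ}
    {z : ι → κ → K} (hD : ∀ i, 0 ≤ D i) (hc : ∀ j, 0 ≤ c j) (hz : ∀ i j, 0 ≤ z i j)
    (hsupply : ∀ j, ∑ i, z i j ≤ s j) (hdemand : ∀ i, D i ≤ ∑ j, z i j * min (c j) (D i)) :
    ∃ nn : ι → κ → ℕ, (∀ j, ∑ i, nn i j ≤ s j) ∧ ∀ i, D i / 2 ≤ ∑ j, (nn i j : K) * c j := by
  classical
  obtain ⟨a, ha⟩ := (isFractionalAssignment_copies hz hsupply hdemand).exists_half_assignment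
    (fun k ↦ hc k.1) hD
  refine ⟨fun i j ↦ #{t : Fin (s j) | a ⟨j, t⟩ = some i}, fun j ↦ ?_, fun i ↦ ?_⟩
  · simpa using sum_card_filter_eq_some_le_card fun t : Fin (s j) ↦ a ⟨j, t⟩
  · refine (ha i (mem_univ i)).trans_eq ?_
    rw [sum_filter, Fintype.sum_sigma]
    simp only [← sum_filter, sum_const, nsmul_eq_mul]

end Copies

/-- The assignment LP is a 2-approximate supply polyhedron for `Q||C_min`: if an integer
supply vector `s` admits a fractional solution `z ≥ 0` with `Σ_i z_{ij} ≤ s_j` and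
`Σ_j z_{ij}·min(c_j, D_i) ≥ D_i`, then there is an integral allocation of the supplied jobs
giving every machine `i` total capacity at least `D_i / 2`. -/
theorem assignmentLP_two_approximate_supply (m n : ℕ)
    (D : Fin m → ℝ) (hD : ∀ i, 0 < D i)
    (c : Fin n → ℝ) (hc : ∀ j, 0 < c j)
    (s : Fin n → ℕ)
    (z : Fin m → Fin n → ℝ) (hz : ∀ i j, 0 ≤ z i j)
    (hA1 : ∀ j, ∑ i, z i j ≤ (s j : ℝ))
    (hA2 : ∀ i, D i ≤ ∑ j, z i j * min (c j) (D i)) :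
    ∃ nn : Fin m → Fin n → ℕ,
      (∀ j, ∑ i, nn i j ≤ s j) ∧
      (∀ i, D i / 2 ≤ ∑ j, (nn i j : ℝ) * c j) := by
  exact assignmentLP_two_approximate_supply_general (fun i ↦ (hD i).le) (fun j ↦ (hc j).le)
    hz hA1 hA2
end

section
/- Let there be m machines with demands D_1,…,D_m > 0 and n job types with capacities sorted so that 0 < c_1 ≤ c_2 ≤ ⋯ ≤ c_n. Let s, t ∈ ℝ_{≥0}^n satisfy Σ_{k ≥ j} t_k ≥ Σ_{k ≥ j} s_k for every j ∈ {1,…,n}. If there exists z : {1,…,m} × {1,…,n} → ℝ_{≥0} with Σ_i z_{ij} ≤ s_j for every j and Σ_j z_{ij}·min(c_j, D_i) ≥ D_i for every i, then there exists z' : {1,…,m} × {1,…,n} → ℝ_{≥0} with Σ_i z'_{ij} ≤ t_j for every j and Σ_j z'_{ij}·min(c_j, D_i) ≥ D_i for every i. -/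
open Finset

/-!
Replace `s` by the part `∑ i, z i j` of it that is in use, and lay `s` and `t` out as consecutive
intervals on a line, the largest job type starting at `0`. Sending as much mass from `j` to `k` as
the `j`-th interval of `s` meets the `k`-th interval of `t` is the comonotone coupling of `s` and
`t`. Domination of the upper sums says that every point of an interval of `s` lies in an interval
of `t` of at least the same index, so the coupling only moves mass upwards. Each machine's share of
a job type is then moved in the proportions prescribed by the coupling, and since
`min (c j) (D i)` is monotone in `j`, no machine loses.
-/

section ComonotoneCoupling

lemma sum_filter_le_sub_filter_lt_eq_sub_empty {α G : Type*} [LinearOrder α] [AddCommGroup G]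
    (F : Finset α → G) (A : Finset α) :
    ∑ a ∈ A, (F {b ∈ A | a ≤ b} - F {b ∈ A | a < b}) = F A - F ∅ := by
  induction A using Finset.induction_on_min with
  | empty => simp
  | insert a A ha ih =>
    have ha_notMem : a ∉ A := fun h => (ha a h).false
    have filter_le : {b ∈ insert a A | a ≤ b} = insert a A :=
      filter_true_of_mem (by simpa using fun b hb => (ha b hb).le)
    have filter_lt : {b ∈ insert a A | a < b} = A := by
      rw [filter_insert, if_neg (lt_irrefl a), filter_true_of_mem ha]
    have tail_eq : ∑ x ∈ A, (F {b ∈ insert a A | x ≤ b} - F {b ∈ insert a A | x < b}) =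
        ∑ x ∈ A, (F {b ∈ A | x ≤ b} - F {b ∈ A | x < b}) :=
      sum_congr rfl fun x hx => by
        rw [filter_insert, filter_insert, if_neg (ha x hx).not_ge, if_neg (ha x hx).not_gt]
    rw [sum_insert ha_notMem, filter_le, filter_lt, tail_eq, ih, sub_add_sub_cancel]

lemma sum_Ici_sub_Ioi_eq_univ_sub_empty {α G : Type*} [Fintype α] [LinearOrder α]
    [LocallyFiniteOrderTop α] [AddCommGroup G] (F : Finset α → G) :
    ∑ a, (F (Ici a) - F (Ioi a)) = F univ - F ∅ := by
  simpa only [filter_le_eq_Ici, filter_lt_eq_Ioi] using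
    sum_filter_le_sub_filter_lt_eq_sub_empty F univ

variable {α β G : Type*} [LinearOrder α] [LocallyFiniteOrderTop α] [LinearOrder β]
  [LocallyFiniteOrderTop β] [AddCommGroup G] [LinearOrder G]

/-- The comonotone coupling of two mass distributions: the one whose joint upper sums are
`min (∑ l ∈ Ici j, s l) (∑ l ∈ Ici k, t l)`. Its value at `(j, k)` is the mass which this joint
upper sum gives to a rectangle, that is, the length of the overlap of the intervals
`[∑ l ∈ Ioi j, s l, ∑ l ∈ Ici j, s l]` and `[∑ l ∈ Ioi k, t l, ∑ l ∈ Ici k, t l]`. -/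
def comonotoneCoupling (s : α → G) (t : β → G) (j : α) (k : β) : G :=
  (min (∑ l ∈ Ici j, s l) (∑ l ∈ Ici k, t l) - min (∑ l ∈ Ioi j, s l) (∑ l ∈ Ici k, t l)) -
    (min (∑ l ∈ Ici j, s l) (∑ l ∈ Ioi k, t l) - min (∑ l ∈ Ioi j, s l) (∑ l ∈ Ioi k, t l))

lemma comonotoneCoupling_comm (s : α → G) (t : β → G) (j : α) (k : β) :
    comonotoneCoupling s t j k = comonotoneCoupling t s k j := by
  simp only [comonotoneCoupling, min_comm (∑ l ∈ _, s l)]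
  abel

lemma sum_le_sum_of_sum_Ici_le [Fintype α] {s t : α → G}
    (hst : ∀ j, ∑ l ∈ Ici j, s l ≤ ∑ l ∈ Ici j, t l) : ∑ j, s j ≤ ∑ j, t j := by
  cases isEmpty_or_nonempty α with
  | inl _ => simp
  | inr _ =>
    obtain ⟨bot, bot_le⟩ := Finite.exists_min (id : α → α)
    have Ici_bot : Ici bot = univ := eq_univ_of_forall fun j => mem_Ici.2 (bot_le j)
    simpa only [Ici_bot] using hst bot

variable [IsOrderedAddMonoid G]

lemma min_sub_min_le_min_sub_min {a b x y : G} (hab : a ≤ b) (hxy : x ≤ y) :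
    min b x - min a x ≤ min b y - min a y := by
  grind

lemma sum_Ioi_le_sum_Ici {s : α → G} (hs : ∀ j, 0 ≤ s j) (j : α) :
    ∑ l ∈ Ioi j, s l ≤ ∑ l ∈ Ici j, s l :=
  sum_le_sum_of_subset_of_nonneg Ioi_subset_Ici_self fun l _ _ => hs l

lemma comonotoneCoupling_nonneg {s : α → G} {t : β → G} (hs : ∀ j, 0 ≤ s j) (ht : ∀ k, 0 ≤ t k)
    (j : α) (k : β) : 0 ≤ comonotoneCoupling s t j k :=
  sub_nonneg.2 (min_sub_min_le_min_sub_min (sum_Ioi_le_sum_Ici hs j) (sum_Ioi_le_sum_Ici ht k))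

lemma sum_comonotoneCoupling_right [Fintype β] {s : α → G} (hs : ∀ j, 0 ≤ s j) (t : β → G)
    (j : α) :
    ∑ k, comonotoneCoupling s t j k =
      min (∑ l ∈ Ici j, s l) (∑ k, t k) - min (∑ l ∈ Ioi j, s l) (∑ k, t k) := by
  have telescope := sum_Ici_sub_Ioi_eq_univ_sub_empty fun A : Finset β =>
    min (∑ l ∈ Ici j, s l) (∑ k ∈ A, t k) - min (∑ l ∈ Ioi j, s l) (∑ k ∈ A, t k)
  simpa only [comonotoneCoupling, sum_empty, min_eq_right (sum_nonneg fun l _ => hs l), sub_self,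
    sub_zero] using telescope

lemma sum_comonotoneCoupling_right_eq [Fintype α] [Fintype β] {s : α → G} {t : β → G}
    (hs : ∀ j, 0 ≤ s j) (hst : ∑ j, s j ≤ ∑ k, t k) (j : α) :
    ∑ k, comonotoneCoupling s t j k = s j := by
  have upperSum_le (A : Finset α) : ∑ l ∈ A, s l ≤ ∑ k, t k :=
    (sum_le_univ_sum_of_nonneg hs).trans hst
  rw [sum_comonotoneCoupling_right hs, min_eq_left (upperSum_le _), min_eq_left (upperSum_le _),
    ← add_sum_Ioi_eq_sum_Ici, add_sub_cancel_right]

lemma sum_comonotoneCoupling_left_le [Fintype α] (s : α → G) {t : β → G} (ht : ∀ k, 0 ≤ t k)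
    (k : β) : ∑ j, comonotoneCoupling s t j k ≤ t k := by
  simp only [comonotoneCoupling_comm s t]
  rw [sum_comonotoneCoupling_right ht, ← add_sum_Ioi_eq_sum_Ici]
  grind

lemma le_of_comonotoneCoupling_ne_zero {s t : α → G} (hs : ∀ j, 0 ≤ s j) (ht : ∀ k, 0 ≤ t k)
    (hst : ∀ j, ∑ l ∈ Ici j, s l ≤ ∑ l ∈ Ici j, t l) {j k : α}
    (hjk : comonotoneCoupling s t j k ≠ 0) : j ≤ k := by
  contrapose! hjk
  have sIci_le_tIoi : ∑ l ∈ Ici j, s l ≤ ∑ l ∈ Ioi k, t l :=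
    (hst j).trans (sum_le_sum_of_subset_of_nonneg
      (fun _ hl => mem_Ioi.2 (hjk.trans_le (mem_Ici.1 hl))) fun l _ _ => ht l)
  have sIoi_le_tIoi := (sum_Ioi_le_sum_Ici hs j).trans sIci_le_tIoi
  have tIoi_le_tIci := sum_Ioi_le_sum_Ici ht k
  rw [comonotoneCoupling, min_eq_left sIci_le_tIoi, min_eq_left sIoi_le_tIoi,
    min_eq_left (sIci_le_tIoi.trans tIoi_le_tIci), min_eq_left (sIoi_le_tIoi.trans tIoi_le_tIci),
    sub_self]

end ComonotoneCoupling

section Reroute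

variable {ι α β K : Type*} [Fintype ι] [Semifield K]

/-- The assignment obtained from `z` when the mass at `j` is moved according to the transport plan
`f`, every row `i` contributing to `f j k` in proportion to its share `z i j` of column `j`.
A zero column of `z` contributes nothing, by the convention `x / 0 = 0`. -/
def reroute [Fintype α] (z : ι → α → K) (f : α → β → K) (i : ι) (k : β) : K :=
  ∑ j, z i j / (∑ i', z i' j) * f j k

variable [LinearOrder K] [IsStrictOrderedRing K] {z : ι → α → K} {f : α → β → K}

lemma div_sum_mul_sum_cancel (hz : ∀ i j, 0 ≤ z i j) (i : ι) (j : α) :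
    z i j / (∑ i', z i' j) * ∑ i', z i' j = z i j :=
  div_mul_cancel_of_imp fun h =>
    (sum_eq_zero_iff_of_nonneg fun i' _ => hz i' j).1 h i (mem_univ i)

variable [Fintype α]

lemma reroute_nonneg (hz : ∀ i j, 0 ≤ z i j) (hf : ∀ j k, 0 ≤ f j k) (i : ι) (k : β) :
    0 ≤ reroute z f i k :=
  sum_nonneg fun j _ => mul_nonneg (div_nonneg (hz i j) (sum_nonneg fun i' _ => hz i' j)) (hf j k)

lemma sum_reroute_le (z : ι → α → K) (hf : ∀ j k, 0 ≤ f j k) (k : β) :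
    ∑ i, reroute z f i k ≤ ∑ j, f j k := by
  simp only [reroute]
  rw [sum_comm]
  refine sum_le_sum fun j _ => ?_
  rw [← sum_mul, ← sum_div]
  exact mul_le_of_le_one_left (hf j k) (div_self_le_one _)

lemma sum_mul_le_sum_reroute_mul [Fintype β] (hz : ∀ i j, 0 ≤ z i j) (hf : ∀ j k, 0 ≤ f j k)
    (hzf : ∀ j, ∑ k, f j k = ∑ i, z i j) {v : α → K} {w : β → K}
    (hvw : ∀ j k, f j k ≠ 0 → v j ≤ w k) (i : ι) :
    ∑ j, z i j * v j ≤ ∑ k, reroute z f i k * w k := by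
  have share_nonneg (j) : 0 ≤ z i j / ∑ i', z i' j :=
    div_nonneg (hz i j) (sum_nonneg fun i' _ => hz i' j)
  have mul_le_mul_of_support (j k) : f j k * v j ≤ f j k * w k := by
    rcases eq_or_ne (f j k) 0 with h | h
    · simp [h]
    · exact mul_le_mul_of_nonneg_left (hvw j k h) (hf j k)
  calc ∑ j, z i j * v j
      = ∑ j, ∑ k, z i j / (∑ i', z i' j) * (f j k * v j) := by
        simp only [← mul_sum, ← sum_mul, hzf, ← mul_assoc, div_sum_mul_sum_cancel hz]
    _ ≤ ∑ j, ∑ k, z i j / (∑ i', z i' j) * (f j k * w k) :=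
        sum_le_sum fun j _ => sum_le_sum fun k _ =>
          mul_le_mul_of_nonneg_left (mul_le_mul_of_support j k) (share_nonneg j)
    _ = ∑ k, reroute z f i k * w k := by
        rw [sum_comm]
        simp only [reroute, sum_mul, mul_assoc]

end Reroute

theorem assignmentLP_upward_feasible_general {ι α K : Type*} [Fintype ι] [Fintype α]
    [LinearOrder α] [LocallyFiniteOrderTop α] [Field K] [LinearOrder K] [IsStrictOrderedRing K]
    {D : ι → K} {v : ι → α → K} (hv : ∀ i, Monotone (v i)) {s t : α → K} (ht : ∀ j, 0 ≤ t j)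
    (hdom : ∀ j, ∑ l ∈ Ici j, s l ≤ ∑ l ∈ Ici j, t l) {z : ι → α → K} (hz : ∀ i j, 0 ≤ z i j)
    (hzs : ∀ j, ∑ i, z i j ≤ s j) (hzD : ∀ i, D i ≤ ∑ j, z i j * v i j) :
    ∃ z' : ι → α → K, (∀ i j, 0 ≤ z' i j) ∧ (∀ j, ∑ i, z' i j ≤ t j) ∧
      ∀ i, D i ≤ ∑ j, z' i j * v i j := by
  let used (j : α) : K := ∑ i, z i j
  have used_nonneg (j) : 0 ≤ used j := sum_nonneg fun i _ => hz i j
  have used_dom (j) : ∑ l ∈ Ici j, used l ≤ ∑ l ∈ Ici j, t l :=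
    (sum_le_sum fun l _ => hzs l).trans (hdom j)
  let f := comonotoneCoupling used t
  have f_nonneg : ∀ j k, 0 ≤ f j k := comonotoneCoupling_nonneg used_nonneg ht
  refine ⟨reroute z f, reroute_nonneg hz f_nonneg, fun k => ?_, fun i => (hzD i).trans ?_⟩
  · exact (sum_reroute_le z f_nonneg k).trans (sum_comonotoneCoupling_left_le used ht k)
  · exact sum_mul_le_sum_reroute_mul hz f_nonneg
      (sum_comonotoneCoupling_right_eq used_nonneg (sum_le_sum_of_sum_Ici_le used_dom))
      (fun j k hjk => hv i (le_of_comonotoneCoupling_ne_zero used_nonneg ht used_dom hjk)) i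

/-- The assignment LP polyhedron `P_ass` for `Q||C_min` is upward-feasible: if the supply
vector `t` dominates `s` in suffix sums (capacities sorted increasingly) and `s ∈ P_ass`,
then `t ∈ P_ass`. -/
theorem assignmentLP_upward_feasible (m n : ℕ)
    (D : Fin m → ℝ) (hD : ∀ i, 0 < D i)
    (c : Fin n → ℝ) (hc : ∀ j, 0 < c j) (hmono : Monotone c)
    (s t : Fin n → ℝ) (hs : ∀ j, 0 ≤ s j) (ht : ∀ j, 0 ≤ t j)
    (hdom : ∀ j : Fin n,
      ∑ l ∈ Finset.univ.filter (fun l => j ≤ l), s l ≤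
        ∑ l ∈ Finset.univ.filter (fun l => j ≤ l), t l)
    (z : Fin m → Fin n → ℝ) (hz : ∀ i j, 0 ≤ z i j)
    (hA1 : ∀ j, ∑ i, z i j ≤ s j)
    (hA2 : ∀ i, D i ≤ ∑ j, z i j * min (c j) (D i)) :
    ∃ z' : Fin m → Fin n → ℝ,
      (∀ i j, 0 ≤ z' i j) ∧
      (∀ j, ∑ i, z' i j ≤ t j) ∧
      (∀ i, D i ≤ ∑ j, z' i j * min (c j) (D i)) := by
  simp only [filter_le_eq_Ici] at hdom
  exact assignmentLP_upward_feasible_general (fun i => hmono.min monotone_const) ht hdom hz hA1 hA2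
end

section
/- Let there be m machines with demands D_1,…,D_m > 0 and cardinality bounds f_1,…,f_m ∈ ℕ, and n job types with capacities sorted so that 0 < c_1 ≤ c_2 ≤ ⋯ ≤ c_n. Let s, t ∈ ℝ_{≥0}^n satisfy Σ_{k ≥ j} t_k ≥ Σ_{k ≥ j} s_k for every j ∈ {1,…,n}. If there exists a fractional configuration solution for the supply vector s, then there exists a fractional configuration solution for the supply vector t. -/
open Finset

/-- A fractional configuration-LP solution for a CCKP instance (`m` machines with demands
`D` and cardinality bounds `f`, `n` job types with capacities `c`) and supply vector `s`:
a finitely supported family `z(i, S) ≥ 0` over configurations `S` (multisets of job types,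
encoded as functions `Fin n → ℕ`, with `|S| ≤ f i` and total capacity at least `D i`),
with `Σ_S z(i,S) = 1` for every machine `i` and `Σ_{i,S} z(i,S)·S(j) ≤ s j` for every `j`. -/
def ConfigSol (m n : ℕ) (D : Fin m → ℝ) (f : Fin m → ℕ) (c : Fin n → ℝ)
    (s : Fin n → ℝ) : Prop :=
  ∃ (𝒮 : Finset (Fin n → ℕ)) (z : Fin m → (Fin n → ℕ) → ℝ),
    (∀ i S, 0 ≤ z i S) ∧
    (∀ i S, S ∉ 𝒮 → z i S = 0) ∧
    (∀ i S, 0 < z i S → (∑ j, S j ≤ f i ∧ D i ≤ ∑ j, (S j : ℝ) * c j)) ∧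
    (∀ i, ∑ S ∈ 𝒮, z i S = 1) ∧
    (∀ j, ∑ i, ∑ S ∈ 𝒮, z i S * (S j : ℝ) ≤ s j)

/-!
The supply vectors that admit a fractional configuration solution form a polyhedron: the Minkowski
sum of the convex hulls of the configurations of each machine and of the nonnegative orthant. It is
convex and upward closed. Replacing every job of type `a` by a job of a type `b` of no smaller
capacity turns configurations into configurations, so the linear map moving the whole `a`-th
coordinate onto the `b`-th preserves the polyhedron and, by convexity, so does moving only a part of
that coordinate. Starting from `s`, go through the job types in increasing order and push the excess
of each over its entry of `t` to the next type: no suffix-sum inequality is violated on the way, so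
the last type has no excess either and the vector reached is at most `t`.
-/

section Relabelling

variable {ι κ : Type*}

theorem sum_funOnFinite_map_mul {R : Type*} [NonUnitalNonAssocSemiring R] [Fintype ι] [Fintype κ]
    (φ : ι → κ) (x : ι → R) (w : κ → R) :
    ∑ j, FunOnFinite.map φ x j * w j = ∑ k, x k * w (φ k) := by
  classical
  simp only [FunOnFinite.map_apply_apply, sum_mul]
  rw [← sum_fiberwise univ φ fun k => x k * w (φ k)]
  exact sum_congr rfl fun j _ => sum_congr rfl fun k hk => by rw [(mem_filter.1 hk).2]

theorem natCast_funOnFinite_map {R : Type*} [NonAssocSemiring R] [Finite ι] [Finite κ] (φ : ι → κ)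
    (x : ι → ℕ) :
    (fun j => ((FunOnFinite.map φ x j : ℕ) : R)) = FunOnFinite.map φ fun k => (x k : R) := by
  classical
  have := Fintype.ofFinite ι
  ext j
  simp only [FunOnFinite.map_apply_apply, Nat.cast_sum]

theorem monotone_funOnFinite_linearMap {R M : Type*} [Semiring R] [AddCommMonoid M] [PartialOrder M]
    [IsOrderedAddMonoid M] [Module R M] [Finite ι] [Finite κ] (φ : ι → κ) :
    Monotone (FunOnFinite.linearMap R M φ) := by
  classical
  have := Fintype.ofFinite ι
  intro x y hxy j
  simp only [FunOnFinite.linearMap_apply_apply]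
  exact sum_le_sum fun k _ => hxy k

theorem funOnFinite_linearMap_update_id_sub {R M : Type*} [Ring R] [AddCommGroup M] [Module R M]
    [Finite ι] [DecidableEq ι] (a b : ι) (x : ι → M) :
    FunOnFinite.linearMap R M (Function.update id a b) x - x =
      Pi.single b (x a) - Pi.single a (x a) := by
  have := Fintype.ofFinite ι
  calc FunOnFinite.linearMap R M (Function.update id a b) x - x
      = ∑ k, (Pi.single (Function.update id a b k) (x k) - Pi.single k (x k)) := by
        conv_lhs => rw [← univ_sum_single x]
        simp only [map_sum, FunOnFinite.linearMap_piSingle, sum_sub_distrib]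
    _ = Pi.single b (x a) - Pi.single a (x a) := by
        rw [Fintype.sum_eq_single a fun k hk => by simp [hk], Function.update_self]

end Relabelling

section Transfer

variable {ι : Type*}

theorem sub_single_add_single_mem_of_convex {𝕜 : Type*} [Field 𝕜] [LinearOrder 𝕜]
    [IsStrictOrderedRing 𝕜] [Finite ι] [DecidableEq ι] {X : Set (ι → 𝕜)} (hX : Convex 𝕜 X)
    {x : ι → 𝕜} (hx : x ∈ X) {a b : ι}
    (hab : FunOnFinite.linearMap 𝕜 𝕜 (Function.update id a b) x ∈ X) {δ : 𝕜} (hδ : 0 ≤ δ)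
    (hδx : δ ≤ x a) : x - Pi.single a δ + Pi.single b δ ∈ X := by
  have hratio : δ / x a ∈ Set.Icc 0 1 :=
    ⟨div_nonneg hδ (hδ.trans hδx), div_le_one_of_le₀ hδx (hδ.trans hδx)⟩
  have hcancel : δ / x a * x a = δ :=
    div_mul_cancel_of_imp fun h => le_antisymm (hδx.trans_eq h) hδ
  have hmem := hX.add_smul_sub_mem hx hab hratio
  rw [funOnFinite_linearMap_update_id_sub, smul_sub, ← Pi.single_smul, ← Pi.single_smul,
    smul_eq_mul, hcancel] at hmem
  rwa [sub_add_eq_add_sub, add_sub_assoc]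

-- `A` holds the indices whose excess over `t` has not been pushed on yet.
theorem mem_of_suffixSum_le {M : Type*} [AddCommGroup M] [LinearOrder M] [IsOrderedAddMonoid M]
    [LinearOrder ι] {X : Set (ι → M)} (hupper : IsUpperSet X)
    (htransfer : ∀ x ∈ X, ∀ a b, a < b → ∀ δ, 0 ≤ δ → δ ≤ x a →
      x - Pi.single a δ + Pi.single b δ ∈ X)
    (A : Finset ι) {s t : ι → M} (hs : s ∈ X) (ht : 0 ≤ t) (hoff : ∀ l ∉ A, s l ≤ t l)
    (hdom : ∀ j ∈ A, ∑ l ∈ A with j ≤ l, s l ≤ ∑ l ∈ A with j ≤ l, t l) : t ∈ X := by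
  induction A using Finset.induction_on_min generalizing s with
  | empty => exact hupper (fun l => hoff l (notMem_empty l)) hs
  | insert a A ha ih =>
    have haA : a ∉ A := fun h => (ha a h).false
    have hdom_a : s a + ∑ l ∈ A, s l ≤ t a + ∑ l ∈ A, t l := by
      have hdom_insert := hdom a (mem_insert_self a A)
      rwa [filter_true_of_mem (by simpa using fun l hl => (ha l hl).le), sum_insert haA,
        sum_insert haA] at hdom_insert
    have hdom_A : ∀ j ∈ A, ∑ l ∈ A with j ≤ l, s l ≤ ∑ l ∈ A with j ≤ l, t l := fun j hj => by
      simpa only [filter_insert, (ha j hj).not_ge, if_false] using hdom j (mem_insert_of_mem hj)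
    rcases le_or_gt (s a) (t a) with hle | hlt
    · refine ih hs (fun l hl => ?_) hdom_A
      rcases eq_or_ne l a with rfl | hla
      · exact hle
      · exact hoff l (by simp [hla, hl])
    have hne : A.Nonempty := by
      by_contra! rfl
      exact hdom_a.not_gt (by simpa using hlt)
    obtain ⟨b, hbA, hbmin⟩ : ∃ b ∈ A, ∀ l ∈ A, b ≤ l := exists_min_image A id hne
    refine ih (htransfer s hs a b (ha b hbA) (s a - t a) (sub_nonneg.2 hlt.le)
      (sub_le_self _ (ht a))) (fun l hl => ?_) (fun j hj => ?_)
    · have hlb : l ≠ b := fun h => hl (h ▸ hbA)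
      rcases eq_or_ne l a with rfl | hla
      · simp [hlb]
      · simpa [hlb, hla] using hoff l (by simp [hla, hl])
    · rcases (hbmin j hj).eq_or_lt with rfl | hbj
      · rw [filter_true_of_mem hbmin]
        simpa [sum_add_distrib, sum_sub_distrib, haA, hbA, ← add_sub_assoc, add_comm] using hdom_a
      · simpa [sum_add_distrib, sum_sub_distrib, haA, hbj.not_ge] using hdom_A j hj

end Transfer

section ConvexHull

variable {𝕜 α E : Type*} [Field 𝕜] [LinearOrder 𝕜] [IsStrictOrderedRing 𝕜] [AddCommGroup E]
  [Module 𝕜 E]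

theorem mem_convexHull_image_iff_exists_finsupp {g : α → E} {A : Set α} {x : E} :
    x ∈ convexHull 𝕜 (g '' A) ↔ ∃ w : α →₀ 𝕜, (∀ a, 0 ≤ w a) ∧ (∀ a, w a ≠ 0 → a ∈ A) ∧
      (w.sum fun _ r => r) = 1 ∧ (w.sum fun a r => r • g a) = x := by
  constructor
  · rw [mem_convexHull_iff_exists_fintype]
    rintro ⟨κ, _, w, z, hw0, hw1, hz, rfl⟩
    choose a haA hga using hz
    refine ⟨∑ i, Finsupp.single (a i) (w i), fun b => ?_, fun b hb => ?_, ?_, ?_⟩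
    · rw [Finsupp.finsetSum_apply]
      exact sum_nonneg fun i _ => Finsupp.single_nonneg.2 (hw0 i) b
    · rw [Finsupp.finsetSum_apply] at hb
      obtain ⟨i, -, hi⟩ := exists_ne_zero_of_sum_ne_zero hb
      rw [Finsupp.single_apply_ne_zero] at hi
      exact hi.1 ▸ haA i
    · rw [← Finsupp.sum_finsetSum_index] <;> simp [hw1]
    · rw [← Finsupp.sum_finsetSum_index] <;> simp [hga, add_smul]
  · rintro ⟨w, hw0, hwA, hw1, rfl⟩
    exact (convex_convexHull 𝕜 _).sum_mem (fun a _ => hw0 a) hw1 fun a ha =>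
      subset_convexHull 𝕜 _ ⟨a, hwA a (Finsupp.mem_support_iff.1 ha), rfl⟩

end ConvexHull

section Polyhedron

open scoped Pointwise

variable {ι : Type*} [Fintype ι]

/-- The configurations of a machine with demand `d` and cardinality bound `k`, for job types with
capacities `c`. -/
def configurations (d : ℝ) (k : ℕ) (c : ι → ℝ) : Set (ι → ℕ) :=
  {S | ∑ j, S j ≤ k ∧ d ≤ ∑ j, (S j : ℝ) * c j}

/-- The convex hull of the configurations of a single machine, seen as real vectors. -/
def configPolytope (d : ℝ) (k : ℕ) (c : ι → ℝ) : Set (ι → ℝ) :=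
  convexHull ℝ ((fun S j => (S j : ℝ)) '' configurations d k c)

/-- The configuration polyhedron `P_conf`: a supply vector lies in it when it dominates a sum of one
fractional configuration per machine, unused supply being the summand from the nonnegative
orthant. -/
def configPolyhedron {μ : Type*} [Fintype μ] (D : μ → ℝ) (f : μ → ℕ) (c : ι → ℝ) :
    Set (ι → ℝ) :=
  ∑ i, configPolytope (D i) (f i) c + Set.Ici 0

theorem funOnFinite_map_mem_configurations {d : ℝ} {k : ℕ} {c : ι → ℝ} {φ : ι → ι}
    (hφ : ∀ j, c j ≤ c (φ j)) {S : ι → ℕ} (hS : S ∈ configurations d k c) :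
    FunOnFinite.map φ S ∈ configurations d k c := by
  refine ⟨?_, hS.2.trans ?_⟩
  · simpa using (sum_funOnFinite_map_mul φ S 1).trans_le (by simpa using hS.1)
  · calc ∑ j, (S j : ℝ) * c j
        ≤ ∑ j, (S j : ℝ) * c (φ j) := by gcongr with j; exact hφ j
      _ = ∑ j, ((FunOnFinite.map φ S j : ℕ) : ℝ) * c j := by
        rw [← sum_funOnFinite_map_mul, ← natCast_funOnFinite_map]

theorem funOnFinite_linearMap_mem_configPolytope {d : ℝ} {k : ℕ} {c : ι → ℝ} {φ : ι → ι}
    (hφ : ∀ j, c j ≤ c (φ j)) {x : ι → ℝ} (hx : x ∈ configPolytope d k c) :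
    FunOnFinite.linearMap ℝ ℝ φ x ∈ configPolytope d k c := by
  have himage := Set.mem_image_of_mem (FunOnFinite.linearMap ℝ ℝ φ) hx
  rw [configPolytope, LinearMap.image_convexHull] at himage
  refine convexHull_mono ?_ himage
  rintro _ ⟨_, ⟨S, hS, rfl⟩, rfl⟩
  exact ⟨_, funOnFinite_map_mem_configurations hφ hS, natCast_funOnFinite_map φ S⟩

variable {μ : Type*} [Fintype μ] {D : μ → ℝ} {f : μ → ℕ} {c : ι → ℝ}

theorem mem_configPolyhedron {s : ι → ℝ} : s ∈ configPolyhedron D f c ↔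
    ∃ x : μ → ι → ℝ, (∀ i, x i ∈ configPolytope (D i) (f i) c) ∧ ∑ i, x i ≤ s := by
  constructor
  · rintro ⟨_, hsum, e, he, rfl⟩
    obtain ⟨x, hx, rfl⟩ := (Set.mem_fintype_sum _ _).1 hsum
    exact ⟨x, hx, le_add_of_nonneg_right he⟩
  · rintro ⟨x, hx, hxs⟩
    exact ⟨∑ i, x i, (Set.mem_fintype_sum _ _).2 ⟨x, hx, rfl⟩, s - ∑ i, x i, sub_nonneg.2 hxs,
      add_sub_cancel _ _⟩

theorem funOnFinite_linearMap_mem_configPolyhedron {φ : ι → ι} (hφ : ∀ j, c j ≤ c (φ j))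
    {s : ι → ℝ} (hs : s ∈ configPolyhedron D f c) :
    FunOnFinite.linearMap ℝ ℝ φ s ∈ configPolyhedron D f c := by
  obtain ⟨x, hx, hxs⟩ := mem_configPolyhedron.1 hs
  refine mem_configPolyhedron.2
    ⟨_, fun i => funOnFinite_linearMap_mem_configPolytope hφ (hx i), ?_⟩
  rw [← map_sum]
  exact monotone_funOnFinite_linearMap φ hxs

theorem convex_configPolyhedron : Convex ℝ (configPolyhedron D f c) :=
  (convex_sum _ fun _ _ => convex_convexHull ℝ _).add (convex_Ici 0)

theorem isUpperSet_configPolyhedron : IsUpperSet (configPolyhedron D f c) :=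
  (isUpperSet_Ici 0).add_left

theorem configSol_iff_mem_configPolyhedron {m n : ℕ} {D : Fin m → ℝ} {f : Fin m → ℕ}
    {c s : Fin n → ℝ} : ConfigSol m n D f c s ↔ s ∈ configPolyhedron D f c := by
  constructor
  · rintro ⟨𝒮, z, hz0, hzsupp, hzconf, hz1, hzs⟩
    refine mem_configPolyhedron.2
      ⟨fun i => ∑ S ∈ 𝒮, z i S • fun j => (S j : ℝ), fun i => ?_, fun j => ?_⟩
    · refine mem_convexHull_image_iff_exists_finsupp.2
        ⟨Finsupp.onFinset 𝒮 (z i) fun S => not_imp_comm.1 (hzsupp i S), hz0 i,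
          fun S hS => hzconf i S ((hz0 i S).lt_of_ne' hS), ?_, ?_⟩
      · rw [Finsupp.onFinset_sum _ fun _ => rfl, hz1]
      · rw [Finsupp.onFinset_sum _ (by simp)]
    · simpa using hzs j
  · intro hs
    obtain ⟨x, hx, hxs⟩ := mem_configPolyhedron.1 hs
    choose w hw0 hwconf hw1 hwx using fun i => mem_convexHull_image_iff_exists_finsupp.1 (hx i)
    set 𝒮 := univ.biUnion fun i => (w i).support
    have hsupp (i : Fin m) : (w i).support ⊆ 𝒮 :=
      subset_biUnion_of_mem (fun i => (w i).support) (mem_univ i)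
    refine ⟨𝒮, fun i => w i, hw0, fun i S hS => ?_, fun i S hS => hwconf i S hS.ne',
      fun i => ?_, fun j => ?_⟩
    · exact Finsupp.notMem_support_iff.1 fun h => hS (hsupp i h)
    · rw [← hw1 i, Finsupp.sum_of_support_subset _ (hsupp i) _ fun _ _ => rfl]
    · have hxj (i : Fin m) : ∑ S ∈ 𝒮, w i S * (S j : ℝ) = x i j := by
        rw [← hwx i, Finsupp.sum_of_support_subset _ (hsupp i) _ (by simp)]
        simp
      simpa [hxj] using hxs j

end Polyhedron

/-- The configuration polyhedron `P_conf` for CCKP is upward-feasible: if the supply vector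
`t` dominates `s` in suffix sums (capacities sorted increasingly) and `s` admits a fractional
configuration solution, then so does `t`. -/
theorem configLP_upward_feasible (m n : ℕ)
    (D : Fin m → ℝ) (hD : ∀ i, 0 < D i)
    (f : Fin m → ℕ)
    (c : Fin n → ℝ) (hc : ∀ j, 0 < c j) (hmono : Monotone c)
    (s t : Fin n → ℝ) (hs : ∀ j, 0 ≤ s j) (ht : ∀ j, 0 ≤ t j)
    (hdom : ∀ j : Fin n,
      ∑ l ∈ Finset.univ.filter (fun l => j ≤ l), s l ≤
        ∑ l ∈ Finset.univ.filter (fun l => j ≤ l), t l)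
    (hsol : ConfigSol m n D f c s) :
    ConfigSol m n D f c t := by
  rw [configSol_iff_mem_configPolyhedron] at hsol ⊢
  refine mem_of_suffixSum_le isUpperSet_configPolyhedron (fun x hx a b hab δ hδ hδx => ?_) univ
    hsol ht (by simp) fun j _ => hdom j
  have hφ (k : Fin n) : c k ≤ c (Function.update id a b k) := by
    rcases eq_or_ne k a with rfl | hk
    · simpa using hmono hab.le
    · simp [hk]
  exact sub_single_add_single_mem_of_convex convex_configPolyhedron hx
    (funOnFinite_linearMap_mem_configPolyhedron hφ hx) hδ hδx
end
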